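/- (Frobenius-type completeness theorem) Assume A₀, A₁, A₂, A₃ are real analytic on a connected and simply connected open U ⊆ ℝ². For K ≥ 0 let ℱ_K be the matrix-valued function on U whose rows are the symmetrised iterated derivatives D_{(a₁}⋯D_{a_j)}V for 0 ≤ j ≤ K (so ℱ_K has 1 + 2 + ⋯ + (K+1) rows and 6 columns), and assume each ℱ_K has constant rank on U. If K₀ is the smallest natural number with rank ℱ_{K₀} = rank ℱ_{K₀+1}, then rank ℱ_{K₀+k} = rank ℱ_{K₀} for all k ∈ ℕ, and the set of solutions Ψ : U → ℝ⁶ of the linear system ∂ₓΨ + Ω₁Ψ = 0, ∂_yΨ + Ω₂Ψ = 0 is a real vector space of dimension 6 − rank ℱ_{K₀}. -/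

import Mathlib

/-!
The matrices `Ω₁, Ω₂` define a connection on the trivial bundle with fibre `ℝ⁶`, and the solutions
of the linear system are its parallel sections. A direct computation (`curvature`) shows that the
curvature matrix has only one nonzero row, the last one, which is `V`. Hence a parallel section is
annihilated by `V`, and, differentiating the pairing, by all iterated derivatives of `V`
(`IsPar.iterD_eq_zero`).

The commutator of the operators `D_a` is a multiple of `V`, so reordering derivatives changes them
only by terms of lower order, and the symmetrised derivatives have the same span as all iterated
derivatives (`span_symD`). When the rank is constant and does not grow from order `K₀` to `K₀ + 1`,
this span has local analytic frames and is stable under `D` (`local_frame`, `parallel_frame`), so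
it never grows again (`lowSpan_stable`).

Let `ann p` be the annihilator of the stable span at `p`, of dimension `6 - rank ℱ_{K₀}`. The
pairings of a frame with a solution of the transport equation along a line satisfy a homogeneous
linear equation, so that transport along lines preserves `ann` (`transport_annihilates`). The
curvature vanishes on `ann`, because `V` is in the span. Therefore the sections obtained by
transporting a vector of `ann p` along the radii of a small ball are parallel
(`radial_hasFDerivAt`, `local_exists`). On the simply connected set `U` these local sections extend
to global ones by lifting the identity to a covering space (`monodromy`, `global_exists`). Since a
parallel section is determined by its value at one point (`IsPar.eqOn`), evaluation at a point
identifies the space of solutions with `ann p`.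
-/

noncomputable section

open Matrix

/-- Partial derivative in the first (x) variable. -/
def pdx (f : ℝ × ℝ → ℝ) : ℝ × ℝ → ℝ :=
  fun p => deriv (fun t => f (t, p.2)) p.1

/-- Partial derivative in the second (y) variable. -/
def pdy (f : ℝ × ℝ → ℝ) : ℝ × ℝ → ℝ :=
  fun p => deriv (fun t => f (p.1, t)) p.2

/-- `pd 0 = ∂ₓ`, `pd 1 = ∂_y`. -/
def pd : Fin 2 → (ℝ × ℝ → ℝ) → (ℝ × ℝ → ℝ) := ![pdx, pdy]

/-- The Liouville linear system associated to `(A0, A1, A2, A3)`, holding on `U`. -/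
def LiouvilleSystem (U : Set (ℝ × ℝ)) (A0 A1 A2 A3 ψ1 ψ2 ψ3 : ℝ × ℝ → ℝ) : Prop :=
  ∀ p ∈ U,
    pdx ψ1 p = (2/3) * A1 p * ψ1 p - 2 * A0 p * ψ2 p ∧
    pdy ψ3 p = 2 * A3 p * ψ2 p - (2/3) * A2 p * ψ3 p ∧
    pdy ψ1 p + 2 * pdx ψ2 p
      = (4/3) * A2 p * ψ1 p - (2/3) * A1 p * ψ2 p - 2 * A0 p * ψ3 p ∧
    pdx ψ3 p + 2 * pdy ψ2 p
      = 2 * A3 p * ψ1 p - (4/3) * A1 p * ψ3 p + (2/3) * A2 p * ψ2 p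

/-- `(A0, A1, A2, A3)` is metrisable near `p` (within `U`). -/
def MetrisableNear (U : Set (ℝ × ℝ)) (A0 A1 A2 A3 : ℝ × ℝ → ℝ) (p : ℝ × ℝ) : Prop :=
  ∃ V : Set (ℝ × ℝ), IsOpen V ∧ p ∈ V ∧ V ⊆ U ∧
    ∃ E F G : ℝ × ℝ → ℝ,
      ContDiffOn ℝ (⊤ : ℕ∞) E V ∧ ContDiffOn ℝ (⊤ : ℕ∞) F V ∧ ContDiffOn ℝ (⊤ : ℕ∞) G V ∧
      (∀ q ∈ V, E q * G q - (F q) ^ 2 ≠ 0) ∧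
      (∀ q ∈ V,
        A0 q = (E q * pdy E q - 2 * E q * pdx F q + F q * pdx E q)
                 / (2 * (E q * G q - (F q) ^ 2)) ∧
        A1 q = (3 * F q * pdy E q + G q * pdx E q - 2 * F q * pdx F q - 2 * E q * pdx G q)
                 / (2 * (E q * G q - (F q) ^ 2)) ∧
        A2 q = (2 * F q * pdy F q + 2 * G q * pdy E q - 3 * F q * pdx G q - E q * pdy G q)
                 / (2 * (E q * G q - (F q) ^ 2)) ∧
        A3 q = (2 * G q * pdy F q - G q * pdx G q - F q * pdy G q)
                 / (2 * (E q * G q - (F q) ^ 2)))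

end

noncomputable section

/-- Liouville's first projective invariant `L₁`. -/
def Lio1 (A0 A1 A2 A3 : ℝ × ℝ → ℝ) : ℝ × ℝ → ℝ := fun p =>
  (2/3) * pdx (pdy A1) p - (1/3) * pdx (pdx A2) p - pdy (pdy A0) p
    + A0 p * pdy A2 p + A2 p * pdy A0 p - A3 p * pdx A0 p - 2 * A0 p * pdx A3 p
    - (2/3) * A1 p * pdy A1 p + (1/3) * A1 p * pdx A2 p

/-- Liouville's second projective invariant `L₂`. -/
def Lio2 (A0 A1 A2 A3 : ℝ × ℝ → ℝ) : ℝ × ℝ → ℝ := fun p =>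
  (2/3) * pdx (pdy A2) p - (1/3) * pdy (pdy A1) p - pdx (pdx A3) p
    - A3 p * pdx A1 p - A1 p * pdx A3 p + A0 p * pdy A3 p + 2 * A3 p * pdy A0 p
    + (2/3) * A2 p * pdx A2 p - (1/3) * A2 p * pdy A1 p

/-- The row vector `V = (V₁,…,V₆)`. -/
def Vrow (A0 A1 A2 A3 : ℝ × ℝ → ℝ) : ℝ × ℝ → Fin 6 → ℝ := fun p =>
  ![2 * pdy (Lio2 A0 A1 A2 A3) p + 4 * A2 p * Lio2 A0 A1 A2 A3 p
      + 8 * A3 p * Lio1 A0 A1 A2 A3 p,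
    -2 * pdy (Lio1 A0 A1 A2 A3) p - 2 * pdx (Lio2 A0 A1 A2 A3) p
      - (4/3) * A1 p * Lio2 A0 A1 A2 A3 p + (4/3) * A2 p * Lio1 A0 A1 A2 A3 p,
    2 * pdx (Lio1 A0 A1 A2 A3) p - 8 * A0 p * Lio2 A0 A1 A2 A3 p
      - 4 * A1 p * Lio1 A0 A1 A2 A3 p,
    -5 * Lio2 A0 A1 A2 A3 p,
    -5 * Lio1 A0 A1 A2 A3 p,
    0]

/-- The connection matrix `Ω₁`. -/
def Om1 (A0 A1 A2 A3 : ℝ × ℝ → ℝ) : ℝ × ℝ → Matrix (Fin 6) (Fin 6) ℝ := fun p =>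
  Matrix.of
  ![![-(2/3) * A1 p, 2 * A0 p, 0, 0, 0, 0],
    ![0, 0, 0, -(1/2 : ℝ), 0, 0],
    ![-2 * A3 p, -(2/3) * A2 p, (4/3) * A1 p, 0, 1, 0],
    ![-(4/3) * pdx A2 p + 4 * A0 p * A3 p + (2/3) * pdy A1 p,
      -2 * pdy A0 p + (2/3) * pdx A1 p + 4 * A2 p * A0 p - (4/9) * (A1 p) ^ 2,
      2 * pdx A0 p - 4 * A0 p * A1 p,
      -(1/3) * A1 p, -3 * A0 p, 0],
    ![0, 0, 0, 0, 0, -1],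
    ![-(4/3) * pdx (pdy A2) p - (20/3) * A0 p * A2 p * A3 p + (2/3) * pdy (pdy A1) p
        + 4 * A3 p * pdy A0 p - 2 * A0 p * pdy A3 p - (16/9) * A2 p * pdx A2 p
        + (8/9) * A2 p * pdy A1 p,
      (2/3) * pdx (pdy A1) p - (4/3) * A1 p * pdy A1 p + 2 * A0 p * pdy A2 p
        - 2 * pdy (pdy A0) p + 4 * A2 p * pdy A0 p + 4 * A3 p * pdx A0 p
        + 6 * A0 p * pdx A3 p + (8/9) * A1 p * pdx A2 p
        + (4/3) * A0 p * A1 p * A3 p - (4/3) * A0 p * (A2 p) ^ 2,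
      2 * pdx (pdy A0) p + (2/3) * A0 p * pdx A2 p - (4/3) * A2 p * pdx A0 p
        - 4 * A1 p * pdy A0 p - (4/3) * A0 p * pdy A1 p
        + (8/3) * A0 p * A1 p * A2 p + 4 * A3 p * (A0 p) ^ 2,
      (4/3) * pdx A2 p - pdy A1 p + 5 * A0 p * A3 p,
      (1/3) * pdx A1 p - 4 * pdy A0 p + 3 * A2 p * A0 p - (2/9) * (A1 p) ^ 2,
      -(1/3) * A1 p]]

/-- The connection matrix `Ω₂`. -/
def Om2 (A0 A1 A2 A3 : ℝ × ℝ → ℝ) : ℝ × ℝ → Matrix (Fin 6) (Fin 6) ℝ := fun p =>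
  Matrix.of
  ![![-(4/3) * A2 p, (2/3) * A1 p, 2 * A0 p, 1, 0, 0],
    ![0, 0, 0, 0, -(1/2 : ℝ), 0],
    ![0, -2 * A3 p, (2/3) * A2 p, 0, 0, 0],
    ![0, 0, 0, 0, 0, -1],
    ![-2 * pdy A3 p - 4 * A3 p * A2 p,
      2 * pdx A3 p - (2/3) * pdy A2 p + 4 * A1 p * A3 p - (4/9) * (A2 p) ^ 2,
      (4/3) * pdy A1 p - (2/3) * pdx A2 p + 4 * A0 p * A3 p,
      3 * A3 p, (1/3) * A2 p, 0],
    ![-2 * pdx (pdy A3) p - 4 * A2 p * pdx A3 p - (4/3) * A3 p * pdx A2 p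
        + (2/3) * A3 p * pdy A1 p - (4/3) * A1 p * pdy A3 p
        - 4 * A0 p * (A3 p) ^ 2 - (8/3) * A1 p * A2 p * A3 p,
      2 * pdx (pdx A3) p - (4/3) * A2 p * pdx A2 p - (4/3) * A0 p * A2 p * A3 p
        - (2/3) * pdx (pdy A2) p + 4 * A1 p * pdx A3 p + 4 * A0 p * pdy A3 p
        + 6 * A3 p * pdy A0 p + (4/3) * A3 p * (A1 p) ^ 2 + 2 * A3 p * pdx A1 p
        + (8/9) * A2 p * pdy A1 p,
      -(2/3) * pdx (pdx A2) p + (8/9) * A1 p * pdx A2 p + 4 * A0 p * pdx A3 p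
        - 2 * A3 p * pdx A0 p - (16/9) * A1 p * pdy A1 p + (4/3) * pdx (pdy A1) p
        + (20/3) * A0 p * A1 p * A3 p,
      4 * pdx A3 p - (1/3) * pdy A2 p + 3 * A1 p * A3 p - (2/9) * (A2 p) ^ 2,
      pdx A2 p - (4/3) * pdy A1 p + 5 * A0 p * A3 p,
      (1/3) * A2 p]]

/-- `Ω` indexed by a direction. -/
def Om (A0 A1 A2 A3 : ℝ × ℝ → ℝ) : Fin 2 → ℝ × ℝ → Matrix (Fin 6) (Fin 6) ℝ :=
  ![Om1 A0 A1 A2 A3, Om2 A0 A1 A2 A3]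

/-- The operator `D_a W = ∂_a W − W·Ω_a` on row-vector-valued functions. -/
def Dop (A0 A1 A2 A3 : ℝ × ℝ → ℝ) (a : Fin 2) (W : ℝ × ℝ → Fin 6 → ℝ) :
    ℝ × ℝ → Fin 6 → ℝ := fun p =>
  (fun i => pd a (fun q => W q i) p) - Matrix.vecMul (W p) (Om A0 A1 A2 A3 a p)

/-- Iterated derivative `D_{a₁} ⋯ D_{a_j} W` (the head of the list acts last/outermost). -/
def DIter (A0 A1 A2 A3 : ℝ × ℝ → ℝ) (l : List (Fin 2)) (W : ℝ × ℝ → Fin 6 → ℝ) :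
    ℝ × ℝ → Fin 6 → ℝ :=
  l.foldr (Dop A0 A1 A2 A3) W

/-- Symmetrised iterated derivative `D_{(a₁} ⋯ D_{a_j)} V` of the vector `V`. -/
def DSym (A0 A1 A2 A3 : ℝ × ℝ → ℝ) (l : List (Fin 2)) : ℝ × ℝ → Fin 6 → ℝ := fun p =>
  ((l.permutations.length : ℝ))⁻¹ •
    (l.permutations.map (fun m => DIter A0 A1 A2 A3 m (Vrow A0 A1 A2 A3) p)).sum

/-- The `6 × 6` matrix `M([Γ])` with rows `V, D₁V, D₂V, D₁D₁V, (1/2)(D₁D₂V + D₂D₁V), D₂D₂V`. -/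
def Mmat (A0 A1 A2 A3 : ℝ × ℝ → ℝ) : ℝ × ℝ → Matrix (Fin 6) (Fin 6) ℝ := fun p =>
  Matrix.of
  ![Vrow A0 A1 A2 A3 p,
    DIter A0 A1 A2 A3 [0] (Vrow A0 A1 A2 A3) p,
    DIter A0 A1 A2 A3 [1] (Vrow A0 A1 A2 A3) p,
    DIter A0 A1 A2 A3 [0, 0] (Vrow A0 A1 A2 A3) p,
    (1/2 : ℝ) • (DIter A0 A1 A2 A3 [0, 1] (Vrow A0 A1 A2 A3) p
      + DIter A0 A1 A2 A3 [1, 0] (Vrow A0 A1 A2 A3) p),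
    DIter A0 A1 A2 A3 [1, 1] (Vrow A0 A1 A2 A3) p]

end

noncomputable section

/-- The matrix `ℱ_K` whose rows are the symmetrised iterated derivatives
`D_{(a₁}⋯D_{a_j)}V` for `0 ≤ j ≤ K`; the row `(j, k)` is the symmetrised derivative
with `k` of the `j` indices equal to `2` (i.e. `y`-derivatives). -/
def Fmat (A0 A1 A2 A3 : ℝ × ℝ → ℝ) (K : ℕ) :
    ℝ × ℝ → Matrix ((j : Fin (K + 1)) × Fin (j.1 + 1)) (Fin 6) ℝ := fun p =>
  Matrix.of fun jk i =>
    DSym A0 A1 A2 A3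
      (List.replicate (jk.2 : ℕ) (1 : Fin 2) ++
        List.replicate ((jk.1 : ℕ) - (jk.2 : ℕ)) (0 : Fin 2)) p i

/-- `Ψ : U → ℝ⁶` is a (column-vector) solution of the linear system
`∂ₓΨ + Ω₁Ψ = 0`, `∂_yΨ + Ω₂Ψ = 0` on `U`. -/
def IsParallelSection (U : Set (ℝ × ℝ)) (A0 A1 A2 A3 : ℝ × ℝ → ℝ)
    (Ψ : ℝ × ℝ → Fin 6 → ℝ) : Prop :=
  (∀ i : Fin 6, DifferentiableOn ℝ (fun q => Ψ q i) U) ∧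
  ∀ p ∈ U,
    (fun i => pdx (fun q => Ψ q i) p) + (Om1 A0 A1 A2 A3 p).mulVec (Ψ p) = 0 ∧
    (fun i => pdy (fun q => Ψ q i) p) + (Om2 A0 A1 A2 A3 p).mulVec (Ψ p) = 0

end

/-! ### Partial derivatives -/

section

open Matrix Topology

/-- The coordinate vectors `(1,0)` and `(0,1)`. -/
def dirVec : Fin 2 → ℝ × ℝ := ![(1, 0), (0, 1)]

lemma pd_eq_fderiv (a : Fin 2) {f : ℝ × ℝ → ℝ} {p : ℝ × ℝ} (h : DifferentiableAt ℝ f p) :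
    pd a f p = fderiv ℝ f p (dirVec a) := by
  fin_cases a
  · have h1 : HasDerivAt (fun t : ℝ => ((t, p.2) : ℝ × ℝ)) ((1, 0) : ℝ × ℝ) p.1 :=
      (hasDerivAt_id p.1).prodMk (hasDerivAt_const _ _)
    have h2 : HasFDerivAt f (fderiv ℝ f p) ((fun t : ℝ => ((t, p.2) : ℝ × ℝ)) p.1) := h.hasFDerivAt
    exact (h2.comp_hasDerivAt p.1 h1).deriv
  · have h1 : HasDerivAt (fun t : ℝ => ((p.1, t) : ℝ × ℝ)) ((0, 1) : ℝ × ℝ) p.2 :=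
      (hasDerivAt_const _ _).prodMk (hasDerivAt_id p.2)
    have h2 : HasFDerivAt f (fderiv ℝ f p) ((fun t : ℝ => ((p.1, t) : ℝ × ℝ)) p.2) := h.hasFDerivAt
    exact (h2.comp_hasDerivAt p.2 h1).deriv

lemma pd_congr (a : Fin 2) {f g : ℝ × ℝ → ℝ} {p : ℝ × ℝ} (h : f =ᶠ[𝓝 p] g) :
    pd a f p = pd a g p := by
  fin_cases a
  · have h1 : Filter.Tendsto (fun t : ℝ => ((t, p.2) : ℝ × ℝ)) (𝓝 p.1) (𝓝 p) :=
      (by fun_prop : Continuous (fun t : ℝ => ((t, p.2) : ℝ × ℝ))).tendsto p.1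
    exact Filter.EventuallyEq.deriv_eq (h1.eventually h)
  · have h1 : Filter.Tendsto (fun t : ℝ => ((p.1, t) : ℝ × ℝ)) (𝓝 p.2) (𝓝 p) :=
      (by fun_prop : Continuous (fun t : ℝ => ((p.1, t) : ℝ × ℝ))).tendsto p.2
    exact Filter.EventuallyEq.deriv_eq (h1.eventually h)

lemma pd_add (a : Fin 2) {f g : ℝ × ℝ → ℝ} {p : ℝ × ℝ} (hf : DifferentiableAt ℝ f p)
    (hg : DifferentiableAt ℝ g p) : pd a (fun q => f q + g q) p = pd a f p + pd a g p := by
  rw [pd_eq_fderiv a hf, pd_eq_fderiv a hg, pd_eq_fderiv a (hf.fun_add hg), fderiv_fun_add hf hg]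
  rfl

lemma pd_sub (a : Fin 2) {f g : ℝ × ℝ → ℝ} {p : ℝ × ℝ} (hf : DifferentiableAt ℝ f p)
    (hg : DifferentiableAt ℝ g p) : pd a (fun q => f q - g q) p = pd a f p - pd a g p := by
  rw [pd_eq_fderiv a hf, pd_eq_fderiv a hg, pd_eq_fderiv a (hf.fun_sub hg), fderiv_fun_sub hf hg]
  rfl

lemma pd_mul (a : Fin 2) {f g : ℝ × ℝ → ℝ} {p : ℝ × ℝ} (hf : DifferentiableAt ℝ f p)
    (hg : DifferentiableAt ℝ g p) :
    pd a (fun q => f q * g q) p = f p * pd a g p + pd a f p * g p := by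
  rw [pd_eq_fderiv a hf, pd_eq_fderiv a hg, pd_eq_fderiv a (hf.fun_mul hg), fderiv_fun_mul hf hg]
  simp only [_root_.add_apply, _root_.smul_apply, smul_eq_mul]
  ring

lemma pd_const (a : Fin 2) (c : ℝ) (p : ℝ × ℝ) : pd a (fun _ => c) p = 0 := by
  rw [pd_eq_fderiv a (differentiableAt_const c)]
  simp

lemma pd_sum {ι : Type*} (s : Finset ι) (a : Fin 2) {f : ι → ℝ × ℝ → ℝ} {p : ℝ × ℝ}
    (hf : ∀ i ∈ s, DifferentiableAt ℝ (f i) p) :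
    pd a (fun q => ∑ i ∈ s, f i q) p = ∑ i ∈ s, pd a (f i) p := by
  rw [pd_eq_fderiv a (DifferentiableAt.fun_sum hf), fderiv_fun_sum hf, _root_.sum_apply]
  exact Finset.sum_congr rfl fun i hi => (pd_eq_fderiv a (hf i hi)).symm

lemma analytic_pd {U : Set (ℝ × ℝ)} (hU : IsOpen U) (a : Fin 2) {f : ℝ × ℝ → ℝ}
    (hf : AnalyticOnNhd ℝ f U) : AnalyticOnNhd ℝ (pd a f) U := by
  have h1 : AnalyticOnNhd ℝ (fun p => fderiv ℝ f p (dirVec a)) U :=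
    (ContinuousLinearMap.apply ℝ ℝ (dirVec a)).comp_analyticOnNhd hf.fderiv
  exact h1.congr hU fun p hp => (pd_eq_fderiv a (hf p hp).differentiableAt).symm

/-- Mixed partial derivatives of an analytic function commute. -/
lemma pd_comm {U : Set (ℝ × ℝ)} (hU : IsOpen U) (a b : Fin 2) {f : ℝ × ℝ → ℝ}
    (hf : AnalyticOnNhd ℝ f U) {p : ℝ × ℝ} (hp : p ∈ U) :
    pd a (pd b f) p = pd b (pd a f) p := by
  have key : ∀ a b : Fin 2, pd a (pd b f) p = fderiv ℝ (fderiv ℝ f) p (dirVec a) (dirVec b) := by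
    intro a b
    have h1 : pd b f =ᶠ[𝓝 p] fun q => fderiv ℝ f q (dirVec b) := by
      filter_upwards [hU.mem_nhds hp] with q hq
      exact pd_eq_fderiv b (hf q hq).differentiableAt
    have h2 : DifferentiableAt ℝ (fderiv ℝ f) p := (hf.fderiv p hp).differentiableAt
    rw [pd_congr a h1, pd_eq_fderiv a (h2.clm_apply (differentiableAt_const _)),
      fderiv_clm_apply h2 (differentiableAt_const _)]
    simp
  rw [key, key]
  have hs : IsSymmSndFDerivAt ℝ f p :=
    ((hf p hp).contDiffAt (n := 2)).isSymmSndFDerivAt (by simp)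
  exact hs _ _

/-- A vector-valued function all of whose components are real analytic on a neighbourhood of each
point of `U`. -/
def AnaV (U : Set (ℝ × ℝ)) (W : ℝ × ℝ → Fin 6 → ℝ) : Prop :=
  ∀ i, AnalyticOnNhd ℝ (fun p => W p i) U

end

/-! ### Analyticity of the coefficients -/

section

open Matrix Topology

lemma analytic_pdx {U : Set (ℝ × ℝ)} (hU : IsOpen U) {f : ℝ × ℝ → ℝ}
    (hf : AnalyticOnNhd ℝ f U) : AnalyticOnNhd ℝ (pdx f) U := analytic_pd hU 0 hf

lemma analytic_pdy {U : Set (ℝ × ℝ)} (hU : IsOpen U) {f : ℝ × ℝ → ℝ}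
    (hf : AnalyticOnNhd ℝ f U) : AnalyticOnNhd ℝ (pdy f) U := analytic_pd hU 1 hf

lemma analytic_Lio1 {U : Set (ℝ × ℝ)} (hU : IsOpen U) {A0 A1 A2 A3 : ℝ × ℝ → ℝ}
    (hA0 : AnalyticOnNhd ℝ A0 U) (hA1 : AnalyticOnNhd ℝ A1 U)
    (hA2 : AnalyticOnNhd ℝ A2 U) (hA3 : AnalyticOnNhd ℝ A3 U) :
    AnalyticOnNhd ℝ (Lio1 A0 A1 A2 A3) U := by
  intro p hp
  have a0 := hA0 p hp
  have a1 := hA1 p hp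
  have a2 := hA2 p hp
  have a3 := hA3 p hp
  have b1 := analytic_pdx hU hA0 p hp
  have b2 := analytic_pdx hU hA2 p hp
  have b3 := analytic_pdx hU hA3 p hp
  have c0 := analytic_pdy hU hA0 p hp
  have c1 := analytic_pdy hU hA1 p hp
  have c2 := analytic_pdy hU hA2 p hp
  have d1 := analytic_pdx hU (analytic_pdy hU hA1) p hp
  have d2 := analytic_pdx hU (analytic_pdx hU hA2) p hp
  have d3 := analytic_pdy hU (analytic_pdy hU hA0) p hp
  unfold Lio1
  fun_prop

lemma analytic_Lio2 {U : Set (ℝ × ℝ)} (hU : IsOpen U) {A0 A1 A2 A3 : ℝ × ℝ → ℝ}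
    (hA0 : AnalyticOnNhd ℝ A0 U) (hA1 : AnalyticOnNhd ℝ A1 U)
    (hA2 : AnalyticOnNhd ℝ A2 U) (hA3 : AnalyticOnNhd ℝ A3 U) :
    AnalyticOnNhd ℝ (Lio2 A0 A1 A2 A3) U := by
  intro p hp
  have a0 := hA0 p hp
  have a1 := hA1 p hp
  have a2 := hA2 p hp
  have a3 := hA3 p hp
  have b1 := analytic_pdx hU hA1 p hp
  have b2 := analytic_pdx hU hA2 p hp
  have b3 := analytic_pdx hU hA3 p hp
  have c0 := analytic_pdy hU hA0 p hp
  have c1 := analytic_pdy hU hA1 p hp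
  have c2 := analytic_pdy hU hA3 p hp
  have d1 := analytic_pdx hU (analytic_pdy hU hA2) p hp
  have d2 := analytic_pdx hU (analytic_pdx hU hA3) p hp
  have d3 := analytic_pdy hU (analytic_pdy hU hA1) p hp
  unfold Lio2
  fun_prop

lemma analytic_Vrow {U : Set (ℝ × ℝ)} (hU : IsOpen U) {A0 A1 A2 A3 : ℝ × ℝ → ℝ}
    (hA0 : AnalyticOnNhd ℝ A0 U) (hA1 : AnalyticOnNhd ℝ A1 U)
    (hA2 : AnalyticOnNhd ℝ A2 U) (hA3 : AnalyticOnNhd ℝ A3 U) :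
    AnaV U (Vrow A0 A1 A2 A3) := by
  intro i p hp
  have a0 := hA0 p hp
  have a1 := hA1 p hp
  have a2 := hA2 p hp
  have a3 := hA3 p hp
  have l1 := analytic_Lio1 hU hA0 hA1 hA2 hA3
  have l2 := analytic_Lio2 hU hA0 hA1 hA2 hA3
  have b1 := l1 p hp
  have b2 := l2 p hp
  have c1 := analytic_pdx hU l1 p hp
  have c2 := analytic_pdx hU l2 p hp
  have d1 := analytic_pdy hU l1 p hp
  have d2 := analytic_pdy hU l2 p hp
  fin_cases i <;> simp [Vrow] <;> fun_prop

set_option maxHeartbeats 2000000 in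
lemma analytic_Om {U : Set (ℝ × ℝ)} (hU : IsOpen U) {A0 A1 A2 A3 : ℝ × ℝ → ℝ}
    (hA0 : AnalyticOnNhd ℝ A0 U) (hA1 : AnalyticOnNhd ℝ A1 U)
    (hA2 : AnalyticOnNhd ℝ A2 U) (hA3 : AnalyticOnNhd ℝ A3 U)
    (a : Fin 2) (i j : Fin 6) :
    AnalyticOnNhd ℝ (fun p => Om A0 A1 A2 A3 a p i j) U := by
  intro p hp
  have a0 := hA0 p hp
  have a1 := hA1 p hp
  have a2 := hA2 p hp
  have a3 := hA3 p hp
  have b0 := analytic_pdx hU hA0 p hp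
  have b1 := analytic_pdx hU hA1 p hp
  have b2 := analytic_pdx hU hA2 p hp
  have b3 := analytic_pdx hU hA3 p hp
  have c0 := analytic_pdy hU hA0 p hp
  have c1 := analytic_pdy hU hA1 p hp
  have c2 := analytic_pdy hU hA2 p hp
  have c3 := analytic_pdy hU hA3 p hp
  have d0 := analytic_pdx hU (analytic_pdy hU hA0) p hp
  have d1 := analytic_pdx hU (analytic_pdy hU hA1) p hp
  have d2 := analytic_pdx hU (analytic_pdy hU hA2) p hp
  have d3 := analytic_pdx hU (analytic_pdy hU hA3) p hp
  have e2 := analytic_pdx hU (analytic_pdx hU hA2) p hp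
  have e3 := analytic_pdx hU (analytic_pdx hU hA3) p hp
  have f0 := analytic_pdy hU (analytic_pdy hU hA0) p hp
  have f1 := analytic_pdy hU (analytic_pdy hU hA1) p hp
  fin_cases a <;> fin_cases i <;> fin_cases j <;> simp [Om, Om1, Om2] <;> fun_prop

end

/-! ### The curvature -/

section

open Matrix Topology

section rules
variable {f g : ℝ × ℝ → ℝ} {p : ℝ × ℝ}

lemma pdx_add' (hf : DifferentiableAt ℝ f p) (hg : DifferentiableAt ℝ g p) :
    pdx (fun q => f q + g q) p = pdx f p + pdx g p := pd_add 0 hf hg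
lemma pdy_add' (hf : DifferentiableAt ℝ f p) (hg : DifferentiableAt ℝ g p) :
    pdy (fun q => f q + g q) p = pdy f p + pdy g p := pd_add 1 hf hg
lemma pdx_sub' (hf : DifferentiableAt ℝ f p) (hg : DifferentiableAt ℝ g p) :
    pdx (fun q => f q - g q) p = pdx f p - pdx g p := pd_sub 0 hf hg
lemma pdy_sub' (hf : DifferentiableAt ℝ f p) (hg : DifferentiableAt ℝ g p) :
    pdy (fun q => f q - g q) p = pdy f p - pdy g p := pd_sub 1 hf hg
lemma pdx_mul' (hf : DifferentiableAt ℝ f p) (hg : DifferentiableAt ℝ g p) :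
    pdx (fun q => f q * g q) p = f p * pdx g p + pdx f p * g p := pd_mul 0 hf hg
lemma pdy_mul' (hf : DifferentiableAt ℝ f p) (hg : DifferentiableAt ℝ g p) :
    pdy (fun q => f q * g q) p = f p * pdy g p + pdy f p * g p := pd_mul 1 hf hg
lemma pdx_const' (c : ℝ) : pdx (fun _ => c) p = 0 := pd_const 0 c p
lemma pdy_const' (c : ℝ) : pdy (fun _ => c) p = 0 := pd_const 1 c p
lemma pdx_sq' (hf : DifferentiableAt ℝ f p) :
    pdx (fun q => f q ^ 2) p = 2 * f p * pdx f p := by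
  simp only [pow_two]; rw [pdx_mul' hf hf]; ring
lemma pdy_sq' (hf : DifferentiableAt ℝ f p) :
    pdy (fun q => f q ^ 2) p = 2 * f p * pdy f p := by
  simp only [pow_two]; rw [pdy_mul' hf hf]; ring

end rules

/-- The rules bringing the partial derivatives of order at most three of an analytic function into
the form `∂ₓ⋯∂ₓ∂_y⋯∂_y`. -/
lemma jet_rules {U : Set (ℝ × ℝ)} (hU : IsOpen U) {f : ℝ × ℝ → ℝ} (hf : AnalyticOnNhd ℝ f U)
    {p : ℝ × ℝ} (hp : p ∈ U) :
    pdy (pdx f) p = pdx (pdy f) p ∧ pdy (pdx (pdx f)) p = pdx (pdx (pdy f)) p ∧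
    pdy (pdx (pdy f)) p = pdx (pdy (pdy f)) p := by
  have h0 : ∀ {f : ℝ × ℝ → ℝ} (_ : AnalyticOnNhd ℝ f U) {p : ℝ × ℝ} (_ : p ∈ U),
      pdy (pdx f) p = pdx (pdy f) p := fun hf _ hp => pd_comm hU 1 0 hf hp
  have h1 : pdx (pdy (pdx f)) p = pdx (pdx (pdy f)) p := by
    refine pd_congr 0 ?_
    filter_upwards [hU.mem_nhds hp] with q hq
    exact h0 hf hq
  exact ⟨h0 hf hp, by rw [h0 (analytic_pdx hU hf) hp, h1], h0 (analytic_pdy hU hf) hp⟩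

set_option maxHeartbeats 4000000 in
/-- The curvature of the connection has its first five rows equal to zero, and its last row is
`V`. -/
lemma curvature {U : Set (ℝ × ℝ)} (hU : IsOpen U) {A0 A1 A2 A3 : ℝ × ℝ → ℝ}
    (hA0 : AnalyticOnNhd ℝ A0 U) (hA1 : AnalyticOnNhd ℝ A1 U)
    (hA2 : AnalyticOnNhd ℝ A2 U) (hA3 : AnalyticOnNhd ℝ A3 U) {p : ℝ × ℝ} (hp : p ∈ U)
    (i j : Fin 6) :
    pd 0 (fun q => Om A0 A1 A2 A3 1 q i j) p - pd 1 (fun q => Om A0 A1 A2 A3 0 q i j) p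
      + (Om A0 A1 A2 A3 0 p * Om A0 A1 A2 A3 1 p) i j
      - (Om A0 A1 A2 A3 1 p * Om A0 A1 A2 A3 0 p) i j
      = if i = 5 then Vrow A0 A1 A2 A3 p j else 0 := by
  have a0 := (hA0 p hp).differentiableAt
  have a1 := (hA1 p hp).differentiableAt
  have a2 := (hA2 p hp).differentiableAt
  have a3 := (hA3 p hp).differentiableAt
  have b0 := (analytic_pdx hU hA0 p hp).differentiableAt
  have b1 := (analytic_pdx hU hA1 p hp).differentiableAt
  have b2 := (analytic_pdx hU hA2 p hp).differentiableAt
  have b3 := (analytic_pdx hU hA3 p hp).differentiableAt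
  have c0 := (analytic_pdy hU hA0 p hp).differentiableAt
  have c1 := (analytic_pdy hU hA1 p hp).differentiableAt
  have c2 := (analytic_pdy hU hA2 p hp).differentiableAt
  have c3 := (analytic_pdy hU hA3 p hp).differentiableAt
  have d0 := (analytic_pdx hU (analytic_pdy hU hA0) p hp).differentiableAt
  have d1 := (analytic_pdx hU (analytic_pdy hU hA1) p hp).differentiableAt
  have d2 := (analytic_pdx hU (analytic_pdy hU hA2) p hp).differentiableAt
  have d3 := (analytic_pdx hU (analytic_pdy hU hA3) p hp).differentiableAt
  have e2 := (analytic_pdx hU (analytic_pdx hU hA2) p hp).differentiableAt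
  have e3 := (analytic_pdx hU (analytic_pdx hU hA3) p hp).differentiableAt
  have f0 := (analytic_pdy hU (analytic_pdy hU hA0) p hp).differentiableAt
  have f1 := (analytic_pdy hU (analytic_pdy hU hA1) p hp).differentiableAt
  obtain ⟨m0, -, o0⟩ := jet_rules hU hA0 hp
  obtain ⟨m1, -, o1⟩ := jet_rules hU hA1 hp
  obtain ⟨m2, n2, o2⟩ := jet_rules hU hA2 hp
  obtain ⟨m3, n3, -⟩ := jet_rules hU hA3 hp
  have hx : pd 0 = pdx := rfl
  have hy : pd 1 = pdy := rfl
  rw [hx, hy]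
  simp only [Matrix.mul_apply, Fin.sum_univ_six]
  fin_cases i <;> fin_cases j <;>
    simp [Om, Om1, Om2, Vrow, -neg_mul] <;>
    (try unfold Lio1) <;> (try unfold Lio2) <;>
    simp (disch := fun_prop) only [pdx_add', pdy_add', pdx_sub', pdy_sub', pdx_mul', pdy_mul',
      pdx_const', pdy_const', pdx_sq', pdy_sq', m0, o0, m1, o1, m2, n2, o2, m3, n3] <;> ring

end

/-! ### Covariant derivatives and symmetrisation -/

section

open Matrix Topology

/-- The operator `W ↦ ∂_a W − W·Ω_a` of a connection with matrices `Ω 0`, `Ω 1`. -/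
noncomputable def covD (Ω : Fin 2 → ℝ × ℝ → Matrix (Fin 6) (Fin 6) ℝ) (a : Fin 2)
    (W : ℝ × ℝ → Fin 6 → ℝ) : ℝ × ℝ → Fin 6 → ℝ := fun p =>
  (fun i => pd a (fun q => W q i) p) - Matrix.vecMul (W p) (Ω a p)

/-- The iterated derivative `D_{a₁} ⋯ D_{a_j} V`. -/
noncomputable def iterD (Ω : Fin 2 → ℝ × ℝ → Matrix (Fin 6) (Fin 6) ℝ) (V : ℝ × ℝ → Fin 6 → ℝ)
    (l : List (Fin 2)) : ℝ × ℝ → Fin 6 → ℝ :=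
  l.foldr (covD Ω) V

/-- The symmetrised iterated derivative `D_{(a₁} ⋯ D_{a_j)} V`. -/
noncomputable def symD (Ω : Fin 2 → ℝ × ℝ → Matrix (Fin 6) (Fin 6) ℝ) (V : ℝ × ℝ → Fin 6 → ℝ)
    (l : List (Fin 2)) : ℝ × ℝ → Fin 6 → ℝ := fun p =>
  ((l.permutations.length : ℝ))⁻¹ • (l.permutations.map (fun m => iterD Ω V m p)).sum

/-- Standing assumptions on a connection: analytic on the open set `U`, with curvature
`∂ₓΩ₂ − ∂_yΩ₁ + [Ω₁,Ω₂]` whose only nonzero row is the last one, equal to `V`. -/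
structure GoodConn (U : Set (ℝ × ℝ)) (Ω : Fin 2 → ℝ × ℝ → Matrix (Fin 6) (Fin 6) ℝ)
    (V : ℝ × ℝ → Fin 6 → ℝ) : Prop where
  isOpen : IsOpen U
  anaΩ : ∀ a i j, AnalyticOnNhd ℝ (fun p => Ω a p i j) U
  anaV : AnaV U V
  curv : ∀ p ∈ U, ∀ i j, pd 0 (fun q => Ω 1 q i j) p - pd 1 (fun q => Ω 0 q i j) p
      + (Ω 0 p * Ω 1 p) i j - (Ω 1 p * Ω 0 p) i j = if i = 5 then V p j else 0

variable {U : Set (ℝ × ℝ)} {Ω : Fin 2 → ℝ × ℝ → Matrix (Fin 6) (Fin 6) ℝ}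
  {V : ℝ × ℝ → Fin 6 → ℝ}

lemma covD_apply (a : Fin 2) (W : ℝ × ℝ → Fin 6 → ℝ) (p : ℝ × ℝ) (i : Fin 6) :
    covD Ω a W p i = pd a (fun q => W q i) p - ∑ k, W p k * Ω a p k i := rfl

lemma covD_ana (h : GoodConn U Ω V) (a : Fin 2) {W : ℝ × ℝ → Fin 6 → ℝ} (hW : AnaV U W) :
    AnaV U (covD Ω a W) := by
  intro i
  simp only [covD_apply]
  refine (analytic_pd h.isOpen a (hW i)).sub ?_
  exact Finset.analyticOnNhd_fun_sum _ fun k _ => (hW k).mul (h.anaΩ a k i)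

lemma iterD_ana (h : GoodConn U Ω V) (l : List (Fin 2)) : AnaV U (iterD Ω V l) := by
  induction l with
  | nil => exact h.anaV
  | cons a l ih => exact covD_ana h a ih

lemma covD_congr (hU : IsOpen U) (a : Fin 2) {W W' : ℝ × ℝ → Fin 6 → ℝ}
    (h : ∀ p ∈ U, W p = W' p) {p : ℝ × ℝ} (hp : p ∈ U) : covD Ω a W p = covD Ω a W' p := by
  ext i
  rw [covD_apply, covD_apply, h p hp]
  congr 1
  refine pd_congr a ?_
  filter_upwards [hU.mem_nhds hp] with q hq
  rw [h q hq]

/-- The Leibniz rule. -/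
lemma covD_smul_add (a : Fin 2) {c : ℝ × ℝ → ℝ} {X Y : ℝ × ℝ → Fin 6 → ℝ} {p : ℝ × ℝ}
    (hc : DifferentiableAt ℝ c p) (hX : ∀ i, DifferentiableAt ℝ (fun q => X q i) p)
    (hY : ∀ i, DifferentiableAt ℝ (fun q => Y q i) p) :
    covD Ω a (fun q => c q • X q + Y q) p
      = c p • covD Ω a X p + (pd a c p • X p + covD Ω a Y p) := by
  ext i
  simp only [covD_apply, Pi.add_apply, Pi.smul_apply, smul_eq_mul]
  rw [pd_add a (hc.fun_mul (hX i)) (hY i), pd_mul a hc (hX i)]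
  simp only [add_mul, Finset.sum_add_distrib, mul_assoc, ← Finset.mul_sum]
  ring

/-- The commutator of covariant derivatives is the curvature, hence a multiple of `V`. -/
lemma covD_comm (h : GoodConn U Ω V) {W : ℝ × ℝ → Fin 6 → ℝ} (hW : AnaV U W) {p : ℝ × ℝ}
    (hp : p ∈ U) :
    covD Ω 0 (covD Ω 1 W) p - covD Ω 1 (covD Ω 0 W) p = -(W p 5) • V p := by
  have hWd : ∀ k, DifferentiableAt ℝ (fun q => W q k) p := fun k => (hW k p hp).differentiableAt
  have hΩd : ∀ a k i, DifferentiableAt ℝ (fun q => Ω a q k i) p :=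
    fun a k i => (h.anaΩ a k i p hp).differentiableAt
  have key : ∀ a b i, covD Ω a (covD Ω b W) p i = pd a (pd b (fun q => W q i)) p
      - ∑ k, (W p k * pd a (fun q => Ω b q k i) p + pd a (fun q => W q k) p * Ω b p k i)
      - ∑ k, (pd b (fun q => W q k) p - ∑ m, W p m * Ω b p m k) * Ω a p k i := by
    intro a b i
    rw [covD_apply]
    simp only [covD_apply]
    rw [pd_sub a (analytic_pd h.isOpen b (hW i) p hp).differentiableAt
      (DifferentiableAt.fun_sum fun k _ => (hWd k).fun_mul (hΩd b k i)),
      pd_sum _ a fun k _ => (hWd k).fun_mul (hΩd b k i)]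
    simp only [pd_mul a (hWd _) (hΩd b _ i)]
  ext i
  rw [Pi.sub_apply, key, key, pd_comm h.isOpen 0 1 (hW i) hp]
  have hc := fun k => h.curv p hp k i
  have h0 := hc 0
  have h1 := hc 1
  have h2 := hc 2
  have h3 := hc 3
  have h4 := hc 4
  have h5 := hc 5
  simp only [Matrix.mul_apply, Fin.sum_univ_six, Fin.reduceEq, if_true, if_false] at h0 h1 h2 h3 h4 h5
  simp only [Fin.sum_univ_six, Pi.smul_apply, smul_eq_mul]
  linear_combination -(W p 0) * h0 - W p 1 * h1 - W p 2 * h2 - W p 3 * h3 - W p 4 * h4 - W p 5 * h5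

/-- `InSpan U Ω V k W`: on `U`, the function `W` is a linear combination, with coefficients analytic
on `U`, of iterated derivatives of `V` of order less than `k`. -/
inductive InSpan (U : Set (ℝ × ℝ)) (Ω : Fin 2 → ℝ × ℝ → Matrix (Fin 6) (Fin 6) ℝ)
    (V : ℝ × ℝ → Fin 6 → ℝ) (k : ℕ) : (ℝ × ℝ → Fin 6 → ℝ) → Prop
  | zero {W : ℝ × ℝ → Fin 6 → ℝ} (h : ∀ p ∈ U, W p = 0) : InSpan U Ω V k W
  | cons {W W' : ℝ × ℝ → Fin 6 → ℝ} {c : ℝ × ℝ → ℝ} {l : List (Fin 2)} (hW : InSpan U Ω V k W)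
      (hc : AnalyticOnNhd ℝ c U) (hl : l.length < k)
      (h : ∀ p ∈ U, W' p = c p • iterD Ω V l p + W p) : InSpan U Ω V k W'

lemma InSpan.congr {k : ℕ} {W W' : ℝ × ℝ → Fin 6 → ℝ} (hW : InSpan U Ω V k W)
    (h : ∀ p ∈ U, W' p = W p) : InSpan U Ω V k W' := by
  cases hW with
  | zero h0 => exact .zero fun p hp => by rw [h p hp, h0 p hp]
  | cons hW hc hl h0 => exact .cons hW hc hl fun p hp => by rw [h p hp, h0 p hp]

lemma InSpan.add {k : ℕ} {W W' : ℝ × ℝ → Fin 6 → ℝ} (hW : InSpan U Ω V k W)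
    (hW' : InSpan U Ω V k W') : InSpan U Ω V k (W + W') := by
  induction hW with
  | zero h0 => exact hW'.congr fun p hp => by simp [h0 p hp]
  | cons hW hc hl h0 ih =>
    exact .cons ih hc hl fun p hp => by simp [h0 p hp, add_assoc]

lemma InSpan.mono {k m : ℕ} (hkm : k ≤ m) {W : ℝ × ℝ → Fin 6 → ℝ} (hW : InSpan U Ω V k W) :
    InSpan U Ω V m W := by
  induction hW with
  | zero h0 => exact .zero h0
  | cons hW hc hl h0 ih => exact .cons ih hc (hl.trans_le hkm) h0

lemma InSpan.ana (h : GoodConn U Ω V) {k : ℕ} {W : ℝ × ℝ → Fin 6 → ℝ}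
    (hW : InSpan U Ω V k W) : AnaV U W := by
  induction hW with
  | zero h0 =>
    intro i
    exact (analyticOnNhd_const (v := (0 : ℝ))).congr h.isOpen fun p hp => by simp [h0 p hp]
  | @cons W W' c l hW hc hl h0 ih =>
    intro i
    refine AnalyticOnNhd.congr h.isOpen ((hc.mul (iterD_ana h l i)).add (ih i)) ?_
    intro p hp
    simp [h0 p hp]

lemma InSpan.covD (h : GoodConn U Ω V) (a : Fin 2) {k : ℕ} {W : ℝ × ℝ → Fin 6 → ℝ}
    (hW : InSpan U Ω V k W) : InSpan U Ω V (k + 1) (covD Ω a W) := by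
  induction hW with
  | zero h0 =>
    refine .zero fun p hp => ?_
    rw [covD_congr h.isOpen a (W' := fun _ => 0) h0 hp]
    ext i
    simp [covD_apply, pd_const]
  | @cons W W' c l hW hc hl h0 ih =>
    refine .cons (l := a :: l) (.cons (l := l) ih (analytic_pd h.isOpen a hc) (by omega)
      fun p _ => rfl) hc (by simpa using hl) fun p hp => ?_
    rw [covD_congr h.isOpen a h0 hp, covD_smul_add a (hc p hp).differentiableAt
      (fun i => (iterD_ana h l i p hp).differentiableAt)
      (fun i => (hW.ana h i p hp).differentiableAt)]
    rfl

/-- The span at `p` of the iterated derivatives of `V` of order less than `k`. -/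
noncomputable def lowSpan (Ω : Fin 2 → ℝ × ℝ → Matrix (Fin 6) (Fin 6) ℝ) (V : ℝ × ℝ → Fin 6 → ℝ)
    (k : ℕ) (p : ℝ × ℝ) : Submodule ℝ (Fin 6 → ℝ) :=
  Submodule.span ℝ {x | ∃ l : List (Fin 2), l.length < k ∧ iterD Ω V l p = x}

lemma iterD_mem_lowSpan {k : ℕ} {l : List (Fin 2)} (hl : l.length < k) (p : ℝ × ℝ) :
    iterD Ω V l p ∈ lowSpan Ω V k p := Submodule.subset_span ⟨l, hl, rfl⟩

lemma lowSpan_mono {k m : ℕ} (hkm : k ≤ m) (p : ℝ × ℝ) : lowSpan Ω V k p ≤ lowSpan Ω V m p := by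
  refine Submodule.span_mono ?_
  rintro x ⟨l, hl, rfl⟩
  exact ⟨l, hl.trans_le hkm, rfl⟩

lemma InSpan.mem {k : ℕ} {W : ℝ × ℝ → Fin 6 → ℝ} (hW : InSpan U Ω V k W) {p : ℝ × ℝ}
    (hp : p ∈ U) : W p ∈ lowSpan Ω V k p := by
  induction hW with
  | zero h0 => rw [h0 p hp]; exact zero_mem _
  | cons hW hc hl h0 ih =>
    rw [h0 p hp]
    exact add_mem (Submodule.smul_mem _ _ (iterD_mem_lowSpan hl p)) ih

/-- Reordering the derivatives changes an iterated derivative by terms of lower order only. -/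
lemma perm_inSpan (h : GoodConn U Ω V) {l m : List (Fin 2)} (hlm : l.Perm m) :
    InSpan U Ω V l.length (iterD Ω V l - iterD Ω V m) := by
  induction hlm with
  | nil => exact .zero fun p _ => by simp
  | @cons a l m hlm ih =>
    refine (ih.covD h a).congr fun p hp => ?_
    have e : iterD Ω V l - iterD Ω V m = fun q => (fun _ => (-1 : ℝ)) q • iterD Ω V m q
        + iterD Ω V l q := by
      ext q i; simp; ring
    rw [e, covD_smul_add a (differentiableAt_const _)
      (fun i => (iterD_ana h m i p hp).differentiableAt)
      (fun i => (iterD_ana h l i p hp).differentiableAt), pd_const]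
    simp [iterD]
    abel
  | swap a b l =>
    have key : ∀ s : ℝ, InSpan U Ω V (l.length + 1 + 1) (fun p => (-(s * iterD Ω V l p 5)) • V p) := by
      intro s
      refine .cons (l := []) (W := 0) (c := fun p => -(s * iterD Ω V l p 5)) (.zero fun p _ => rfl)
        ((analyticOnNhd_const.mul (iterD_ana h l 5)).neg) (by simp) fun p hp => by simp [iterD]
    fin_cases a <;> fin_cases b
    · exact .zero fun p _ => by simp
    · refine (key (-1)).congr fun p hp => ?_
      have := covD_comm h (iterD_ana h l) hp
      have e : covD Ω 1 (covD Ω 0 (iterD Ω V l)) p - covD Ω 0 (covD Ω 1 (iterD Ω V l)) p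
        = (iterD Ω V l p 5) • V p := by rw [← neg_sub, this]; simp
      change iterD Ω V (1 :: 0 :: l) p - iterD Ω V (0 :: 1 :: l) p = _ at e
      simpa using e
    · refine (key 1).congr fun p hp => ?_
      have e := covD_comm h (iterD_ana h l) hp
      change iterD Ω V (0 :: 1 :: l) p - iterD Ω V (1 :: 0 :: l) p = _ at e
      simpa using e
    · exact .zero fun p _ => by simp
  | @trans l m n hlm hmn ih1 ih2 =>
    rw [← hlm.length_eq] at ih2
    exact (ih1.add ih2).congr fun p _ => by simp

/-- Symmetrising an iterated derivative changes it by terms of lower order only. -/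
lemma symD_sub_mem (h : GoodConn U Ω V) (l : List (Fin 2)) {p : ℝ × ℝ} (hp : p ∈ U) :
    symD Ω V l p - iterD Ω V l p ∈ lowSpan Ω V l.length p := by
  have hN : ((l.permutations.length : ℝ)) ≠ 0 := by
    rw [List.length_permutations]; exact_mod_cast Nat.factorial_ne_zero _
  have aux : ∀ L : List (List (Fin 2)), (∀ m ∈ L, l.Perm m) →
      (L.map (fun m => iterD Ω V m p)).sum - (L.length : ℝ) • iterD Ω V l p
        ∈ lowSpan Ω V l.length p := by
    intro L hL
    induction L with
    | nil => simp
    | cons m L ih =>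
      have h1 := ih fun m hm => hL m (by simp [hm])
      have h2 := (perm_inSpan h (hL m (by simp))).mem hp
      have := sub_mem h1 h2
      convert this using 1
      simp only [List.map_cons, List.sum_cons, List.length_cons, Pi.sub_apply, Nat.cast_add,
        Nat.cast_one, add_smul, one_smul]
      abel
  have := Submodule.smul_mem _ ((l.permutations.length : ℝ))⁻¹
    (aux l.permutations fun m hm => (List.mem_permutations.1 hm).symm)
  rw [smul_sub, smul_smul, inv_mul_cancel₀ hN, one_smul] at this
  exact this

/-- The symmetrised derivatives of order at most `K` span the same space as all the iterated
derivatives of order at most `K`. -/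
lemma span_symD (h : GoodConn U Ω V) (K : ℕ) {p : ℝ × ℝ} (hp : p ∈ U) :
    Submodule.span ℝ (Set.range fun jk : (j : Fin (K + 1)) × Fin (j.1 + 1) =>
      symD Ω V (List.replicate (jk.2 : ℕ) (1 : Fin 2) ++
        List.replicate ((jk.1 : ℕ) - (jk.2 : ℕ)) (0 : Fin 2)) p) = lowSpan Ω V (K + 1) p := by
  apply le_antisymm
  · rw [Submodule.span_le]
    rintro _ ⟨⟨j, k⟩, rfl⟩
    set l := List.replicate (k : ℕ) (1 : Fin 2) ++ List.replicate ((j : ℕ) - (k : ℕ)) (0 : Fin 2)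
      with hl
    have hlen : l.length < K + 1 := by simp [hl]; omega
    have h1 := lowSpan_mono hlen.le p (symD_sub_mem h l hp)
    simpa using add_mem h1 (iterD_mem_lowSpan (Ω := Ω) (V := V) hlen p)
  · have key : ∀ n ≤ K + 1, lowSpan Ω V n p ≤ Submodule.span ℝ (Set.range
        fun jk : (j : Fin (K + 1)) × Fin (j.1 + 1) =>
      symD Ω V (List.replicate (jk.2 : ℕ) (1 : Fin 2) ++
        List.replicate ((jk.1 : ℕ) - (jk.2 : ℕ)) (0 : Fin 2)) p) := by
      intro n
      induction n with
      | zero =>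
        intro _
        refine Submodule.span_le.2 ?_
        rintro x ⟨l, hl, -⟩
        simp at hl
      | succ n ih =>
        intro hn
        refine Submodule.span_le.2 ?_
        rintro x ⟨l, hl, rfl⟩
        have ih := ih (by omega)
        rcases Nat.lt_succ_iff_lt_or_eq.1 hl with hl | hl
        · exact ih (iterD_mem_lowSpan hl p)
        have hcnt : ∀ l : List (Fin 2), l.count 0 + l.count 1 = l.length := by
          intro l
          induction l with
          | nil => rfl
          | cons a l ih => fin_cases a <;> simp <;> omega
        have hc := hcnt l
        set m := List.replicate (l.count 1) (1 : Fin 2) ++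
          List.replicate (n - l.count 1) (0 : Fin 2) with hm
        have hperm : l.Perm m := by
          rw [List.perm_iff_count]
          intro a
          fin_cases a <;> simp [hm, List.count_replicate] <;> omega
        have hmn : m.length = n := by rw [← hperm.length_eq, hl]
        have h1 := ih (hl ▸ (perm_inSpan h hperm).mem hp)
        have h2 := ih (hmn ▸ symD_sub_mem h m hp)
        have h3 : symD Ω V m p ∈ Submodule.span ℝ (Set.range
            fun jk : (j : Fin (K + 1)) × Fin (j.1 + 1) =>
          symD Ω V (List.replicate (jk.2 : ℕ) (1 : Fin 2) ++
            List.replicate ((jk.1 : ℕ) - (jk.2 : ℕ)) (0 : Fin 2)) p) :=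
          Submodule.subset_span ⟨⟨⟨n, by omega⟩, ⟨l.count 1, by simp; omega⟩⟩, rfl⟩
        have := add_mem (sub_mem h1 h2) h3
        simpa using this
    exact key _ le_rfl

end

/-! ### Local frames and stabilisation of the span -/

section

open Matrix Topology

variable {U : Set (ℝ × ℝ)} {Ω : Fin 2 → ℝ × ℝ → Matrix (Fin 6) (Fin 6) ℝ}
  {V : ℝ × ℝ → Fin 6 → ℝ}

lemma analytic_det {n : Type*} [Fintype n] [DecidableEq n] {N : Set (ℝ × ℝ)}
    {G : ℝ × ℝ → Matrix n n ℝ} (hG : ∀ i j, AnalyticOnNhd ℝ (fun p => G p i j) N) :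
    AnalyticOnNhd ℝ (fun p => (G p).det) N := by
  simp only [Matrix.det_apply']
  exact Finset.analyticOnNhd_fun_sum _ fun σ _ => analyticOnNhd_const.mul
    (Finset.analyticOnNhd_fun_prod _ fun i _ => hG _ _)

lemma analytic_inv {n : Type*} [Fintype n] [DecidableEq n] {N : Set (ℝ × ℝ)}
    {G : ℝ × ℝ → Matrix n n ℝ} (hG : ∀ i j, AnalyticOnNhd ℝ (fun p => G p i j) N)
    (hdet : ∀ p ∈ N, (G p).det ≠ 0) (i j : n) :
    AnalyticOnNhd ℝ (fun p => (G p)⁻¹ i j) N := by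
  simp only [Matrix.inv_def, Matrix.smul_apply, Ring.inverse_eq_inv', smul_eq_mul,
    Matrix.adjugate_apply]
  refine ((analytic_det hG).inv hdet).mul (analytic_det ?_)
  intro k l
  by_cases hk : k = j
  · subst hk
    simp only [Matrix.updateRow_self]
    exact analyticOnNhd_const
  · simp only [Matrix.updateRow_ne hk]
    exact hG k l

/-- Local frames: if the pointwise spans of a family of analytic functions have constant dimension
`r`, then near each point `r` members of the family form a frame, and analytic sections have
analytic coefficients in this frame. The coefficients come from the Gram matrix of the frame. -/
lemma local_frame {ι : Type*} (hU : IsOpen U) {W : ι → ℝ × ℝ → Fin 6 → ℝ}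
    (hW : ∀ i, AnaV U (W i)) {r : ℕ}
    (hr : ∀ p ∈ U, Module.finrank ℝ (Submodule.span ℝ (Set.range fun i => W i p)) = r)
    {p₀ : ℝ × ℝ} (hp₀ : p₀ ∈ U) :
    ∃ N : Set (ℝ × ℝ), IsOpen N ∧ p₀ ∈ N ∧ N ⊆ U ∧ ∃ s : Fin r → ι,
      ∀ X : ℝ × ℝ → Fin 6 → ℝ, AnaV U X →
        (∀ p ∈ U, X p ∈ Submodule.span ℝ (Set.range fun i => W i p)) →
        ∃ c : Fin r → ℝ × ℝ → ℝ, (∀ j, AnalyticOnNhd ℝ (c j) N) ∧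
          ∀ p ∈ N, X p = ∑ j, c j p • W (s j) p := by
  obtain ⟨s, hs⟩ : ∃ s : Fin r → ι, LinearIndependent ℝ (fun j => W (s j) p₀) := by
    obtain ⟨f, hf, -, hli⟩ :=
      Submodule.exists_fun_fin_finrank_span_eq ℝ (Set.range fun i => W i p₀)
    choose s hs using hf
    refine ⟨s ∘ Fin.cast (hr p₀ hp₀).symm, ?_⟩
    have e : (fun j => W ((s ∘ Fin.cast (hr p₀ hp₀).symm) j) p₀)
        = f ∘ Fin.cast (hr p₀ hp₀).symm := funext fun j => hs _
    rw [e]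
    exact hli.comp _ (Fin.cast_injective (hr p₀ hp₀).symm)
  set M : ℝ × ℝ → Matrix (Fin r) (Fin 6) ℝ := fun p => Matrix.of fun j => W (s j) p with hM
  set G : ℝ × ℝ → Matrix (Fin r) (Fin r) ℝ := fun p => M p * (M p)ᵀ with hG
  have hGa : ∀ i j, AnalyticOnNhd ℝ (fun p => G p i j) U := by
    intro i j
    simp only [hG, hM, Matrix.mul_apply, Matrix.transpose_apply, Matrix.of_apply]
    exact Finset.analyticOnNhd_fun_sum _ fun k _ => (hW _ k).mul (hW _ k)
  have hG0 : (G p₀).det ≠ 0 := by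
    have h1 : (G p₀).rank = r := by
      rw [hG]
      simp only [Matrix.rank_self_mul_transpose]
      have : LinearIndependent ℝ (M p₀).row := hs
      simpa using this.rank_matrix
    have h2 : LinearIndependent ℝ (G p₀).row := by
      rw [linearIndependent_iff_card_eq_finrank_span, Set.finrank, ← Matrix.rank_eq_finrank_span_row, h1]
      simp
    have h3 := Matrix.linearIndependent_rows_iff_isUnit.1 h2
    exact ((Matrix.isUnit_iff_isUnit_det _).1 h3).ne_zero
  refine ⟨U ∩ (fun p => (G p).det) ⁻¹' {0}ᶜ,
    (analytic_det hGa).continuousOn.isOpen_inter_preimage hU isOpen_compl_singleton,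
    ⟨hp₀, hG0⟩, Set.inter_subset_left, s, ?_⟩
  intro X hX hmem
  refine ⟨fun j p => ((X p ᵥ* (M p)ᵀ) ᵥ* (G p)⁻¹) j, ?_, ?_⟩
  · intro j
    have hinv := analytic_inv (N := U ∩ (fun p => (G p).det) ⁻¹' {0}ᶜ)
      (fun i j => (hGa i j).mono Set.inter_subset_left) (fun p hp => hp.2)
    simp only [Matrix.vecMul, dotProduct, Matrix.transpose_apply]
    refine Finset.analyticOnNhd_fun_sum _ fun k _ => AnalyticOnNhd.mul ?_ (hinv k j)
    exact Finset.analyticOnNhd_fun_sum _ fun i _ =>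
      ((hX i).mul (hW (s k) i)).mono Set.inter_subset_left
  · rintro p ⟨hpU, hpG⟩
    have hpG : (G p).det ≠ 0 := hpG
    have hunit : IsUnit (G p).det := isUnit_iff_ne_zero.2 hpG
    have hli : LinearIndependent ℝ (M p).row := by
      rw [← Matrix.vecMul_injective_iff, ← Matrix.coe_vecMulLinear,
        injective_iff_map_eq_zero]
      intro v hv
      rw [Matrix.vecMulLinear_apply] at hv
      have : v ᵥ* G p = 0 := by
        rw [hG]; simp only [← Matrix.vecMul_vecMul, hv, Matrix.zero_vecMul]
      have h2 := congrArg (fun x => x ᵥ* (G p)⁻¹) this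
      simpa [Matrix.vecMul_vecMul, Matrix.mul_nonsing_inv _ hunit] using h2
    have hspan : Submodule.span ℝ (Set.range (M p).row)
        = Submodule.span ℝ (Set.range fun i => W i p) := by
      apply Submodule.eq_of_le_of_finrank_eq
      · refine Submodule.span_mono ?_
        rintro _ ⟨j, rfl⟩
        exact ⟨s j, rfl⟩
      · rw [hr p hpU, finrank_span_eq_card hli, Fintype.card_fin]
    have hXp := hmem p hpU
    rw [← hspan, Submodule.mem_span_range_iff_exists_fun] at hXp
    obtain ⟨v, hv⟩ := hXp
    have hv' : v ᵥ* M p = X p := by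
      rw [← hv, Matrix.vecMul_eq_sum]; rfl
    have : (X p ᵥ* (M p)ᵀ) ᵥ* (G p)⁻¹ = v := by
      rw [← hv', Matrix.vecMul_vecMul, Matrix.vecMul_vecMul, ← Matrix.mul_assoc]
      change v ᵥ* (G p * (G p)⁻¹) = v
      rw [Matrix.mul_nonsing_inv _ hunit, Matrix.vecMul_one]
    simp only [this]
    exact hv.symm

lemma covD_sum {ι : Type*} (s : Finset ι) (a : Fin 2) {c : ι → ℝ × ℝ → ℝ}
    {X : ι → ℝ × ℝ → Fin 6 → ℝ} {p : ℝ × ℝ}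
    (hc : ∀ j, DifferentiableAt ℝ (c j) p) (hX : ∀ j i, DifferentiableAt ℝ (fun q => X j q i) p) :
    covD Ω a (fun q => ∑ j ∈ s, c j q • X j q) p
      = ∑ j ∈ s, (c j p • covD Ω a (X j) p + pd a (c j) p • X j p) := by
  ext i
  simp only [covD_apply, Finset.sum_apply, Pi.smul_apply, Pi.add_apply, smul_eq_mul]
  rw [pd_sum _ a fun j _ => (hc j).fun_mul (hX j i)]
  simp only [pd_mul a (hc _) (hX _ i), Finset.sum_mul, mul_sub, Finset.mul_sum]
  rw [Finset.sum_comm, ← Finset.sum_sub_distrib]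
  refine Finset.sum_congr rfl fun j _ => ?_
  simp only [mul_assoc]
  ring

lemma lowSpan_eq_range (k : ℕ) (p : ℝ × ℝ) : lowSpan Ω V k p
    = Submodule.span ℝ (Set.range fun l : {l : List (Fin 2) // l.length < k} =>
        iterD Ω V l.1 p) := by
  unfold lowSpan
  congr 1
  ext x
  simp

/-- If the span of the derivatives of order less than `n` has constant dimension, then sections of
this span differentiate into the span of the derivatives of order at most `n`. -/
lemma covD_mem_lowSpan (h : GoodConn U Ω V) {n r : ℕ}
    (hr : ∀ p ∈ U, Module.finrank ℝ (lowSpan Ω V n p) = r) {X : ℝ × ℝ → Fin 6 → ℝ}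
    (hX : AnaV U X) (hmem : ∀ p ∈ U, X p ∈ lowSpan Ω V n p) (a : Fin 2) {p : ℝ × ℝ} (hp : p ∈ U) :
    covD Ω a X p ∈ lowSpan Ω V (n + 1) p := by
  obtain ⟨N, hN, hpN, hNU, s, hs⟩ := local_frame h.isOpen
    (W := fun l : {l : List (Fin 2) // l.length < n} => iterD Ω V l.1)
    (fun l => iterD_ana h l.1) (fun p hp => by rw [← lowSpan_eq_range]; exact hr p hp) hp
  obtain ⟨c, hc, hXc⟩ := hs X hX fun p hp => by rw [← lowSpan_eq_range]; exact hmem p hp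
  rw [covD_congr hN a hXc hpN, covD_sum _ a (fun j => (hc j p hpN).differentiableAt)
    (fun j i => (iterD_ana h _ i p hp).differentiableAt)]
  refine sum_mem fun j _ => add_mem (Submodule.smul_mem _ _ ?_) (Submodule.smul_mem _ _ ?_)
  · exact iterD_mem_lowSpan (l := a :: (s j).1) (by simpa using (s j).2) p
  · exact iterD_mem_lowSpan ((s j).2.trans (Nat.lt_succ_self n)) p

/-- Once the spans of the derivatives of order less than `n` and at most `n` agree, they contain all
the derivatives. -/
lemma iterD_mem_of_stable (h : GoodConn U Ω V) {n r : ℕ} (hn : 0 < n)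
    (hr : ∀ p ∈ U, Module.finrank ℝ (lowSpan Ω V n p) = r)
    (hst : ∀ p ∈ U, lowSpan Ω V (n + 1) p = lowSpan Ω V n p) (l : List (Fin 2)) :
    ∀ p ∈ U, iterD Ω V l p ∈ lowSpan Ω V n p := by
  induction l with
  | nil => exact fun p _ => iterD_mem_lowSpan (by simpa using hn) p
  | cons a l ih =>
    intro p hp
    rw [← hst p hp]
    exact covD_mem_lowSpan h hr (iterD_ana h l) ih a hp

lemma lowSpan_stable (h : GoodConn U Ω V) {n r : ℕ} (hn : 0 < n)
    (hr : ∀ p ∈ U, Module.finrank ℝ (lowSpan Ω V n p) = r)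
    (hst : ∀ p ∈ U, lowSpan Ω V (n + 1) p = lowSpan Ω V n p) (k : ℕ) {p : ℝ × ℝ} (hp : p ∈ U) :
    lowSpan Ω V (n + k) p = lowSpan Ω V n p := by
  refine le_antisymm (Submodule.span_le.2 ?_) (lowSpan_mono (by omega) p)
  rintro x ⟨l, -, rfl⟩
  exact iterD_mem_of_stable h hn hr hst l p hp

/-- An analytic frame `w` over the open set `N` of the bundle of iterated derivatives, with
connection coefficients `C`. -/
lemma parallel_frame (h : GoodConn U Ω V) {n r : ℕ} (hn : 0 < n)
    (hr : ∀ p ∈ U, Module.finrank ℝ (lowSpan Ω V n p) = r)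
    (hst : ∀ p ∈ U, lowSpan Ω V (n + 1) p = lowSpan Ω V n p) {p₀ : ℝ × ℝ} (hp₀ : p₀ ∈ U) :
    ∃ N : Set (ℝ × ℝ), IsOpen N ∧ p₀ ∈ N ∧ N ⊆ U ∧ ∃ (w : Fin r → ℝ × ℝ → Fin 6 → ℝ)
      (C : Fin 2 → Fin r → Fin r → ℝ × ℝ → ℝ), (∀ j, AnaV U (w j)) ∧
      (∀ a j k, ContinuousOn (C a j k) N) ∧
      (∀ p ∈ N, lowSpan Ω V n p = Submodule.span ℝ (Set.range fun j => w j p)) ∧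
      ∀ a j, ∀ p ∈ N, covD Ω a (w j) p = ∑ k, C a j k p • w k p := by
  obtain ⟨N, hN, hpN, hNU, s, hs⟩ := local_frame h.isOpen
    (W := fun l : {l : List (Fin 2) // l.length < n} => iterD Ω V l.1)
    (fun l => iterD_ana h l.1) (fun p hp => by rw [← lowSpan_eq_range]; exact hr p hp) hp₀
  have hiter := fun l : List (Fin 2) => hs (iterD Ω V l) (iterD_ana h l) (fun p hp => by
    rw [← lowSpan_eq_range]; exact iterD_mem_of_stable h hn hr hst l p hp)
  choose c hc hcs using hiter
  refine ⟨N, hN, hpN, hNU, fun j => iterD Ω V (s j).1, fun a j k => c (a :: (s j).1) k,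
    fun j => iterD_ana h _, fun a j k => (hc _ k).continuousOn, ?_, fun a j p hp => hcs (a :: (s j).1) p hp⟩
  intro p hp
  apply le_antisymm
  · refine Submodule.span_le.2 ?_
    rintro x ⟨l, -, rfl⟩
    rw [hcs l p hp]
    exact sum_mem fun j _ => Submodule.smul_mem _ _ (Submodule.subset_span ⟨j, rfl⟩)
  · refine Submodule.span_le.2 ?_
    rintro x ⟨j, rfl⟩
    exact iterD_mem_lowSpan (s j).2 p

end

/-! ### Radial integration -/

section

open Matrix Topology

section Radial

variable {X E : Type*} [NormedAddCommGroup X] [NormedSpace ℝ X]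
  [NormedAddCommGroup E] [NormedSpace ℝ E]

/-- Existence for the linear ordinary differential equation `g' = ω(p₀ + t k)(k) g` along a
segment so short that `‖ω‖ ‖k‖ ≤ 1/2`. -/
lemma radial_ode [CompleteSpace E] {ω : X → X →L[ℝ] E →L[ℝ] E} {S : Set X} {M : ℝ}
    (hc : ContinuousOn ω S) (hM : ∀ x ∈ S, ‖ω x‖ ≤ M) {p₀ k : X} (hk : M * ‖k‖ ≤ 1 / 2)
    (hseg : ∀ t ∈ Set.Icc (0 : ℝ) 1, p₀ + t • k ∈ S) (v : E) :
    ∃ g : ℝ → E, g 0 = v ∧ ∀ t ∈ Set.Icc (0 : ℝ) 1,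
      HasDerivWithinAt g (ω (p₀ + t • k) k (g t)) (Set.Icc 0 1) t := by
  have hb : ∀ t ∈ Set.Icc (0 : ℝ) 1, ∀ x : E, ‖ω (p₀ + t • k) k x‖ ≤ 1 / 2 * ‖x‖ := by
    intro t ht x
    calc ‖ω (p₀ + t • k) k x‖ ≤ ‖ω (p₀ + t • k)‖ * ‖k‖ * ‖x‖ :=
          (ω (p₀ + t • k)).le_opNorm₂ k x
      _ ≤ M * ‖k‖ * ‖x‖ := by gcongr; exact hM _ (hseg t ht)
      _ ≤ 1 / 2 * ‖x‖ := by gcongr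
  have hPL : IsPicardLindelof (fun t x => ω (p₀ + t • k) k x)
      (⟨0, by simp⟩ : Set.Icc (0 : ℝ) 1) v ‖v‖₊ 0 ‖v‖₊ 1 := by
    refine ⟨fun t ht => ?_, fun x _ => ?_, fun t ht x hx => ?_, by simp⟩
    · refine LipschitzOnWith.of_dist_le_mul fun x _ y _ => ?_
      rw [dist_eq_norm, dist_eq_norm, ← map_sub]
      refine (hb t ht _).trans ?_
      simp only [NNReal.coe_one]
      nlinarith [norm_nonneg (x - y)]
    · have h1 : ContinuousOn (fun t : ℝ => ω (p₀ + t • k)) (Set.Icc 0 1) :=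
        hc.comp (by fun_prop) hseg
      exact (h1.clm_apply continuousOn_const).clm_apply continuousOn_const
    · refine (hb t ht _).trans ?_
      have h1 : ‖x - v‖ ≤ ‖v‖ := by simpa [dist_eq_norm] using hx
      have h2 : ‖x‖ ≤ ‖x - v‖ + ‖v‖ := by simpa using norm_add_le (x - v) v
      simp only [coe_nnnorm]
      linarith
  obtain ⟨g, hg0, hg⟩ := hPL.exists_eq_forall_mem_Icc_hasDerivWithinAt₀
  exact ⟨g, hg0, hg⟩

/-- Radial solutions `g_q` of the linear equation with coefficient form `ω` which are annihilated by
the curvature of `ω` assemble to a parallel section `q ↦ g_q(1)`. The remainder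
`g_{q'}(t) - g_q(t) - t ω(q' - q) g_q(t)` is quadratic in `q' - q` by Grönwall's inequality. -/
lemma radial_hasFDerivAt {ω : X → X →L[ℝ] E →L[ℝ] E} {dω : X → X →L[ℝ] X →L[ℝ] E →L[ℝ] E}
    {p₀ : X} {δ M : ℝ} (hδ1 : δ ≤ 1) (hM0 : 0 < M)
    (hd : ∀ x ∈ Metric.ball p₀ δ, HasFDerivAt ω (dω x) x)
    (hM1 : ∀ x ∈ Metric.ball p₀ δ, ‖ω x‖ ≤ M)
    (hM2 : ∀ x ∈ Metric.ball p₀ δ, ∀ y ∈ Metric.ball p₀ δ, ‖ω y - ω x‖ ≤ M * ‖y - x‖)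
    (hM3 : ∀ x ∈ Metric.ball p₀ δ, ∀ y ∈ Metric.ball p₀ δ,
      ‖ω y - ω x - dω x (y - x)‖ ≤ M * ‖y - x‖ ^ 2)
    {v : E} {g : X → ℝ → E} (hg0 : ∀ q ∈ Metric.ball p₀ δ, g q 0 = v)
    (hg : ∀ q ∈ Metric.ball p₀ δ, ∀ t ∈ Set.Icc (0 : ℝ) 1,
      HasDerivWithinAt (g q) (ω (p₀ + t • (q - p₀)) (q - p₀) (g q t)) (Set.Icc 0 1) t)
    (hcurv : ∀ q ∈ Metric.ball p₀ δ, ∀ t ∈ Set.Icc (0 : ℝ) 1, ∀ h : X,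
      dω (p₀ + t • (q - p₀)) (q - p₀) h (g q t) - dω (p₀ + t • (q - p₀)) h (q - p₀) (g q t)
        + ω (p₀ + t • (q - p₀)) h (ω (p₀ + t • (q - p₀)) (q - p₀) (g q t))
        - ω (p₀ + t • (q - p₀)) (q - p₀) (ω (p₀ + t • (q - p₀)) h (g q t)) = 0)
    {q : X} (hq : q ∈ Metric.ball p₀ δ) :
    HasFDerivAt (fun x => g x 1) ((ω q).flip (g q 1)) q := by
  have hball : ∀ x ∈ Metric.ball p₀ δ, ∀ t ∈ Set.Icc (0 : ℝ) 1,
      p₀ + t • (x - p₀) ∈ Metric.ball p₀ δ := by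
    intro x hx t ht
    rw [mem_ball_iff_norm] at hx ⊢
    rw [add_sub_cancel_left, norm_smul, Real.norm_of_nonneg ht.1]
    nlinarith [norm_nonneg (x - p₀), ht.1, ht.2]
  have hgc : ∀ x ∈ Metric.ball p₀ δ, ContinuousOn (g x) (Set.Icc 0 1) :=
    fun x hx t ht => (hg x hx t ht).continuousWithinAt
  obtain ⟨G, hG⟩ := isCompact_Icc.exists_bound_of_continuousOn (hgc q hq)
  have hG0 : 0 ≤ G := (norm_nonneg _).trans (hG 0 (by simp))
  -- Grönwall's inequality for `R` with zero initial value gives a bound of order `‖x - q‖ ^ 2`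
  have key : ∀ x ∈ Metric.ball p₀ δ, ‖g x 1 - g q 1 - ω q (x - q) (g q 1)‖
      ≤ ((2 * M + 2 * M * M) * G * ‖x - q‖ ^ 2) / M * (Real.exp M - 1) := by
    intro x hx
    set h := x - q with hh
    set k := q - p₀ with hk
    have hkh : x - p₀ = k + h := by rw [hk, hh]; abel
    have hk1 : ‖k‖ ≤ 1 := (mem_ball_iff_norm.1 hq).le.trans hδ1
    have hkh1 : ‖k + h‖ ≤ 1 := by rw [← hkh]; exact (mem_ball_iff_norm.1 hx).le.trans hδ1
    set γ : ℝ → X := fun t => p₀ + t • k with hγ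
    set γ' : ℝ → X := fun t => p₀ + t • (k + h) with hγ'
    have hγγ' : ∀ t, γ' t - γ t = t • h := by intro t; simp [hγ, hγ', smul_add]
    have hγm : ∀ t ∈ Set.Icc (0 : ℝ) 1, γ t ∈ Metric.ball p₀ δ := fun t ht => hball q hq t ht
    have hγm' : ∀ t ∈ Set.Icc (0 : ℝ) 1, γ' t ∈ Metric.ball p₀ δ := by
      intro t ht
      have := hball x hx t ht
      rwa [hkh] at this
    set R : ℝ → E := fun t => g x t - g q t - t • ω (γ t) h (g q t) with hR
    set R' : ℝ → E := fun t => ω (γ' t) (k + h) (g x t) - ω (γ t) k (g q t)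
      - (t • (dω (γ t) k h (g q t) + ω (γ t) h (ω (γ t) k (g q t)))
        + (1 : ℝ) • ω (γ t) h (g q t)) with hR'
    have hRd : ∀ t ∈ Set.Icc (0 : ℝ) 1, HasDerivWithinAt R (R' t) (Set.Icc 0 1) t := by
      intro t ht
      have h1 := hg x hx t ht
      rw [hkh] at h1
      have h2 := hg q hq t ht
      have hγd : HasDerivWithinAt γ k (Set.Icc 0 1) t := by
        have := ((hasDerivAt_id t).smul_const k).const_add p₀
        simpa [hγ] using this.hasDerivWithinAt
      have h3 : HasDerivWithinAt (fun t => ω (γ t) h) (dω (γ t) k h) (Set.Icc 0 1) t := by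
        have h4 : HasDerivWithinAt (fun t => ω (γ t)) (dω (γ t) k) (Set.Icc 0 1) t :=
          HasFDerivAt.comp_hasDerivWithinAt (l := ω) t (hd _ (hγm t ht)) hγd
        have h5 := h4.clm_apply (hasDerivWithinAt_const t _ h)
        simpa using h5
      have h6 := (h3.clm_apply h2)
      have h7 := (hasDerivWithinAt_id t (Set.Icc (0 : ℝ) 1)).fun_smul h6
      exact (h1.fun_sub h2).fun_sub h7
    have hbound : ∀ t ∈ Set.Ico (0 : ℝ) 1, ‖R' t‖ ≤ M * ‖R t‖
        + (2 * M + 2 * M * M) * G * ‖h‖ ^ 2 := by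
      intro t ht'
      have ht := Set.Ico_subset_Icc_self ht'
      have hm := hγm t ht
      have hm' := hγm' t ht
      have ht1 : ‖t‖ ≤ 1 := by rw [Real.norm_of_nonneg ht.1]; exact ht.2
      have hth : ‖t • h‖ ≤ ‖h‖ := by
        rw [norm_smul]; exact mul_le_of_le_one_left (norm_nonneg _) ht1
      have hgt := hG t ht
      -- vanishing curvature on `g q t` exchanges `dω k h` and `dω h k`, so that apart from a linear
      -- term in `R t` only terms of second order in `h` are left
      have hdec : R' t = ω (γ' t) (k + h) (R t)
          + ((ω (γ' t) - ω (γ t) - dω (γ t) (γ' t - γ t)) k (g q t)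
            + (ω (γ' t) - ω (γ t)) h (g q t))
          + ((ω (γ' t) - ω (γ t)) (k + h) (t • ω (γ t) h (g q t))
            + ω (γ t) h (t • ω (γ t) h (g q t))) := by
        have hcv := hcurv q hq t ht h
        change dω (γ t) k h (g q t) - dω (γ t) h k (g q t) + ω (γ t) h (ω (γ t) k (g q t))
          - ω (γ t) k (ω (γ t) h (g q t)) = 0 at hcv
        have hcv2 : dω (γ t) k h (g q t) = dω (γ t) h k (g q t)
          - ω (γ t) h (ω (γ t) k (g q t)) + ω (γ t) k (ω (γ t) h (g q t)) := by
          rw [← sub_eq_zero, ← hcv]; abel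
        rw [hγγ']
        simp only [hR, hR', hcv2, map_add, map_sub, map_smul, _root_.sub_apply, _root_.add_apply,
          _root_.smul_apply, smul_add, smul_sub, one_smul]
        abel
      have e1 : ‖ω (γ' t) (k + h) (R t)‖ ≤ M * ‖R t‖ := by
        calc _ ≤ ‖ω (γ' t)‖ * ‖k + h‖ * ‖R t‖ := (ω (γ' t)).le_opNorm₂ _ _
          _ ≤ M * 1 * ‖R t‖ := by gcongr; exact hM1 _ hm'
          _ = _ := by ring
      have e2 : ‖(ω (γ' t) - ω (γ t) - dω (γ t) (γ' t - γ t)) k (g q t)‖ ≤ M * ‖h‖ ^ 2 * G := by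
        calc _ ≤ ‖ω (γ' t) - ω (γ t) - dω (γ t) (γ' t - γ t)‖ * ‖k‖ * ‖g q t‖ :=
              ContinuousLinearMap.le_opNorm₂ _ _ _
          _ ≤ (M * ‖h‖ ^ 2) * 1 * G := by
            gcongr
            refine (hM3 _ hm _ hm').trans ?_
            rw [hγγ']; gcongr
          _ = _ := by ring
      have e0 : ‖ω (γ' t) - ω (γ t)‖ ≤ M * ‖h‖ := by
        refine (hM2 _ hm _ hm').trans ?_
        rw [hγγ']; gcongr
      have e3 : ‖(ω (γ' t) - ω (γ t)) h (g q t)‖ ≤ M * ‖h‖ * ‖h‖ * G := by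
        calc _ ≤ ‖ω (γ' t) - ω (γ t)‖ * ‖h‖ * ‖g q t‖ := ContinuousLinearMap.le_opNorm₂ _ _ _
          _ ≤ _ := by gcongr
      have e4 : ‖t • ω (γ t) h (g q t)‖ ≤ M * ‖h‖ * G := by
        rw [norm_smul]
        calc _ ≤ 1 * (‖ω (γ t)‖ * ‖h‖ * ‖g q t‖) := by
              gcongr; exact ContinuousLinearMap.le_opNorm₂ _ _ _
          _ ≤ 1 * (M * ‖h‖ * G) := by gcongr; exact hM1 _ hm
          _ = _ := by ring
      have e5 : ‖(ω (γ' t) - ω (γ t)) (k + h) (t • ω (γ t) h (g q t))‖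
          ≤ M * ‖h‖ * 1 * (M * ‖h‖ * G) := by
        calc _ ≤ ‖ω (γ' t) - ω (γ t)‖ * ‖k + h‖ * ‖t • ω (γ t) h (g q t)‖ :=
              ContinuousLinearMap.le_opNorm₂ _ _ _
          _ ≤ _ := by gcongr
      have e6 : ‖ω (γ t) h (t • ω (γ t) h (g q t))‖ ≤ M * ‖h‖ * (M * ‖h‖ * G) := by
        calc _ ≤ ‖ω (γ t)‖ * ‖h‖ * ‖t • ω (γ t) h (g q t)‖ := ContinuousLinearMap.le_opNorm₂ _ _ _
          _ ≤ _ := by gcongr; exact hM1 _ hm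
      rw [hdec]
      refine (norm_add₃_le).trans ?_
      have f1 := norm_add_le ((ω (γ' t) - ω (γ t) - dω (γ t) (γ' t - γ t)) k (g q t))
        ((ω (γ' t) - ω (γ t)) h (g q t))
      have f2 := norm_add_le ((ω (γ' t) - ω (γ t)) (k + h) (t • ω (γ t) h (g q t)))
        (ω (γ t) h (t • ω (γ t) h (g q t)))
      linarith
    have hgr := norm_le_gronwallBound_of_norm_deriv_right_le (δ := 0)
      (fun t ht => (hRd t ht).continuousWithinAt)
      (fun t ht => ((hRd t (Set.Ico_subset_Icc_self ht)).mono_of_mem_nhdsWithin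
        (Icc_mem_nhdsGE_of_mem ht)))
      (by simp [hR, hg0 x hx, hg0 q hq]) hbound 1 (by simp)
    rw [gronwallBound_of_K_ne_0 hM0.ne'] at hgr
    have hR1 : R 1 = g x 1 - g q 1 - ω q h (g q 1) := by
      simp [hR, hγ, hk]
    rw [← hR1]
    refine hgr.trans (le_of_eq ?_)
    simp
  refine .of_isLittleO ?_
  have hO : (fun x => g x 1 - g q 1 - (ω q).flip (g q 1) (x - q)) =O[𝓝 q]
      fun x => ‖x - q‖ ^ 2 := by
    refine Asymptotics.IsBigO.of_bound (((2 * M + 2 * M * M) * G) / M * (Real.exp M - 1)) ?_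
    filter_upwards [Metric.isOpen_ball.mem_nhds hq] with x hx
    have := key x hx
    simp only [norm_pow, norm_norm, ContinuousLinearMap.flip_apply]
    refine this.trans (le_of_eq ?_)
    ring
  refine hO.trans_isLittleO ?_
  have h1 : (fun x : X => x - q) =o[𝓝 q] fun _ => (1 : ℝ) := by
    rw [Asymptotics.isLittleO_one_iff]
    have : Continuous fun x : X => x - q := by fun_prop
    simpa using this.tendsto q
  have h2 := h1.norm_left.mul_isBigO (Asymptotics.isBigO_refl (fun x : X => ‖x - q‖) (𝓝 q))
  have h3 : (fun x : X => ‖x - q‖ ^ 2) =o[𝓝 q] fun x : X => ‖x - q‖ := by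
    simpa [sq] using h2
  exact h3.of_norm_right

end Radial

end

/-! ### The connection form -/

section

open Matrix Topology

variable {U : Set (ℝ × ℝ)} {Ω : Fin 2 → ℝ × ℝ → Matrix (Fin 6) (Fin 6) ℝ}
  {V : ℝ × ℝ → Fin 6 → ℝ}

/-- Bounds near a point for an analytic function: size, Lipschitz constant and quadratic Taylor
remainder. -/
lemma local_bounds {X F : Type*} [NormedAddCommGroup X] [NormedSpace ℝ X]
    [NormedAddCommGroup F] [NormedSpace ℝ F] [CompleteSpace F] {U : Set X} (hU : IsOpen U) {f : X → F}
    (hf : AnalyticOnNhd ℝ f U) {p₀ : X} (hp : p₀ ∈ U) :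
    ∃ M > 0, ∃ ε > 0, Metric.ball p₀ ε ⊆ U ∧ (∀ x ∈ Metric.ball p₀ ε, ‖f x‖ ≤ M) ∧
      (∀ x ∈ Metric.ball p₀ ε, ∀ y ∈ Metric.ball p₀ ε, ‖f y - f x‖ ≤ M * ‖y - x‖) ∧
      ∀ x ∈ Metric.ball p₀ ε, ∀ y ∈ Metric.ball p₀ ε,
        ‖f y - f x - fderiv ℝ f x (y - x)‖ ≤ M * ‖y - x‖ ^ 2 := by
  have h1 := hf.fderiv
  have h2 := h1.fderiv
  set M : ℝ := ‖f p₀‖ + ‖fderiv ℝ f p₀‖ + ‖fderiv ℝ (fderiv ℝ f) p₀‖ + 1 with hM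
  have n0 := norm_nonneg (f p₀)
  have n1 := norm_nonneg (fderiv ℝ f p₀)
  have n2 := norm_nonneg (fderiv ℝ (fderiv ℝ f) p₀)
  have c0 : ∀ᶠ x in 𝓝 p₀, ‖f x‖ < M :=
    (hf p₀ hp).continuousAt.norm.eventually_lt_const (by linarith)
  have c1 : ∀ᶠ x in 𝓝 p₀, ‖fderiv ℝ f x‖ < M :=
    (h1 p₀ hp).continuousAt.norm.eventually_lt_const (by linarith)
  have c2 : ∀ᶠ x in 𝓝 p₀, ‖fderiv ℝ (fderiv ℝ f) x‖ < M :=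
    (h2 p₀ hp).continuousAt.norm.eventually_lt_const (by linarith)
  have cU : ∀ᶠ x in 𝓝 p₀, x ∈ U := hU.mem_nhds hp
  obtain ⟨ε, hε, hb⟩ := Metric.eventually_nhds_iff_ball.1
    ((cU.and c0).and (c1.and c2))
  have hbU : Metric.ball p₀ ε ⊆ U := fun x hx => (hb x hx).1.1
  have hconv := convex_ball p₀ ε
  refine ⟨M, by linarith, ε, hε, hbU, fun x hx => (hb x hx).1.2.le, fun x hx y hy => ?_,
    fun x hx y hy => ?_⟩
  · exact hconv.norm_image_sub_le_of_norm_fderiv_le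
      (fun z hz => (hf z (hbU hz)).differentiableAt) (fun z hz => (hb z hz).2.1.le) hx hy
  · have hseg : segment ℝ x y ⊆ Metric.ball p₀ ε := hconv.segment_subset hx hy
    have := (convex_segment x y).norm_image_sub_le_of_norm_hasFDerivWithin_le'
      (f := f) (f' := fderiv ℝ f) (φ := fderiv ℝ f x) (C := M * ‖y - x‖)
      (fun z hz => (hf z (hbU (hseg hz))).differentiableAt.hasFDerivAt.hasFDerivWithinAt)
      (fun z hz => ?_) (left_mem_segment ℝ x y) (right_mem_segment ℝ x y)
    · refine this.trans (le_of_eq (by ring))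
    · refine (hconv.norm_image_sub_le_of_norm_fderiv_le
        (fun z hz => (h1 z (hbU hz)).differentiableAt) (fun z hz => (hb z hz).2.2.le) hx
        (hseg hz)).trans ?_
      gcongr
      obtain ⟨t, ht, rfl⟩ := (segment_eq_image' ℝ x y ▸ hz :)
      simp only [add_sub_cancel_left, norm_smul, Real.norm_of_nonneg ht.1]
      exact mul_le_of_le_one_left (norm_nonneg _) ht.2

/-- The coordinate forms `dx`, `dy`. -/
noncomputable def coordL : Fin 2 → (ℝ × ℝ →L[ℝ] ℝ) :=
  ![ContinuousLinearMap.fst ℝ ℝ ℝ, ContinuousLinearMap.snd ℝ ℝ ℝ]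

/-- The connection form `-(Ω₁ dx + Ω₂ dy)`, as a form with values in endomorphisms. -/
noncomputable def omF (Ω : Fin 2 → ℝ × ℝ → Matrix (Fin 6) (Fin 6) ℝ) (p : ℝ × ℝ) :
    ℝ × ℝ →L[ℝ] (Fin 6 → ℝ) →L[ℝ] (Fin 6 → ℝ) :=
  -∑ a, ∑ i, ∑ j, Ω a p i j • (coordL a).smulRight
    ((ContinuousLinearMap.proj (R := ℝ) (φ := fun _ : Fin 6 => ℝ) j).smulRight
      (Pi.single i (1 : ℝ) : Fin 6 → ℝ))

lemma omF_apply (p h : ℝ × ℝ) (v : Fin 6 → ℝ) (i : Fin 6) :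
    omF Ω p h v i = -(h.1 * ∑ j, Ω 0 p i j * v j + h.2 * ∑ j, Ω 1 p i j * v j) := by
  have aux : ∀ (c : ℝ) (f : Fin 6 → Fin 6 → ℝ),
      ∑ x, ∑ y, f x y * (c * (v y * (Pi.single x (1 : ℝ) : Fin 6 → ℝ) i))
        = c * ∑ y, f i y * v y := by
    intro c f
    rw [Finset.sum_eq_single i (fun x _ hx => by simp [hx.symm]) (by simp),
      Finset.mul_sum]
    refine Finset.sum_congr rfl fun y _ => ?_
    simp
    ring
  rw [← aux h.1 (fun x y => Ω 0 p x y), ← aux h.2 (fun x y => Ω 1 p x y)]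
  simp [omF, coordL]

lemma analytic_omF (h : GoodConn U Ω V) : AnalyticOnNhd ℝ (omF Ω) U := by
  unfold omF
  refine AnalyticOnNhd.neg (Finset.analyticOnNhd_fun_sum _ fun a _ => Finset.analyticOnNhd_fun_sum _
    fun i _ => Finset.analyticOnNhd_fun_sum _ fun j _ => 
      (ContinuousLinearMap.toSpanSingleton ℝ _).comp_analyticOnNhd (h.anaΩ a i j))

lemma fderiv_eq_pd {f : ℝ × ℝ → ℝ} {p : ℝ × ℝ} (hf : DifferentiableAt ℝ f p) (k : ℝ × ℝ) :
    fderiv ℝ f p k = k.1 * pd 0 f p + k.2 * pd 1 f p := by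
  rw [pd_eq_fderiv 0 hf, pd_eq_fderiv 1 hf]
  have : k = k.1 • dirVec 0 + k.2 • dirVec 1 := by ext <;> simp [dirVec]
  conv_lhs => rw [this, map_add, map_smul, map_smul]
  rfl

lemma fderiv_omF_apply (h : GoodConn U Ω V) {p : ℝ × ℝ} (hp : p ∈ U) (k l : ℝ × ℝ)
    (v : Fin 6 → ℝ) (i : Fin 6) : fderiv ℝ (omF Ω) p k l v i
      = -(l.1 * ∑ j, (k.1 * pd 0 (fun q => Ω 0 q i j) p + k.2 * pd 1 (fun q => Ω 0 q i j) p) * v j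
        + l.2 * ∑ j, (k.1 * pd 0 (fun q => Ω 1 q i j) p + k.2 * pd 1 (fun q => Ω 1 q i j) p) * v j) := by
  have hd := (analytic_omF h p hp).differentiableAt.hasFDerivAt
  have hΩ : ∀ a j, HasFDerivAt (fun q => Ω a q i j) (fderiv ℝ (fun q => Ω a q i j) p) p :=
    fun a j => (h.anaΩ a i j p hp).differentiableAt.hasFDerivAt
  have h1 := hasFDerivAt_pi'.1 ((hd.clm_apply (hasFDerivAt_const l p)).clm_apply
    (hasFDerivAt_const v p)) i
  have h2 : HasFDerivAt (fun q => omF Ω q l v i)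
      (-(l.1 • ∑ j, v j • fderiv ℝ (fun q => Ω 0 q i j) p
        + l.2 • ∑ j, v j • fderiv ℝ (fun q => Ω 1 q i j) p)) p := by
    simp only [omF_apply]
    exact (((HasFDerivAt.fun_sum fun j _ => (hΩ 0 j).mul_const (v j)).const_mul l.1).fun_add
      ((HasFDerivAt.fun_sum fun j _ => (hΩ 1 j).mul_const (v j)).const_mul l.2)).fun_neg
  have h3 := congrArg (fun L : ℝ × ℝ →L[ℝ] ℝ => L k) (h1.unique h2)
  have h4 : fderiv ℝ (omF Ω) p k l v i = (-(l.1 • ∑ j, v j • fderiv ℝ (fun q => Ω 0 q i j) p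
        + l.2 • ∑ j, v j • fderiv ℝ (fun q => Ω 1 q i j) p)) k := by
    rw [← h3]; simp
  rw [h4]
  simp only [_root_.neg_apply, _root_.add_apply, _root_.smul_apply, _root_.sum_apply, smul_eq_mul,
    fderiv_eq_pd (hΩ _ _).differentiableAt, mul_comm (v _)]

/-- The curvature of the connection form acts on `v` through the pairing `V · v` alone. -/
lemma curv_omF_apply (h : GoodConn U Ω V) {p : ℝ × ℝ} (hp : p ∈ U) (v : Fin 6 → ℝ)
    (k l : ℝ × ℝ) (i : Fin 6) :
    (fderiv ℝ (omF Ω) p k l v - fderiv ℝ (omF Ω) p l k v + omF Ω p l (omF Ω p k v)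
      - omF Ω p k (omF Ω p l v)) i
      = -(k.1 * l.2 - k.2 * l.1) * if i = 5 then ∑ j, V p j * v j else 0 := by
  have key : ∑ j, (pd 0 (fun q => Ω 1 q i j) p - pd 1 (fun q => Ω 0 q i j) p
      + (Ω 0 p * Ω 1 p) i j - (Ω 1 p * Ω 0 p) i j) * v j
      = if i = 5 then ∑ j, V p j * v j else 0 := by
    simp only [h.curv p hp]
    by_cases hi : i = 5 <;> simp [hi]
  have e : ∀ a b : Fin 2, ∑ j, (Ω a p * Ω b p) i j * v j
      = ∑ j, Ω a p i j * ∑ m, Ω b p j m * v m := by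
    intro a b
    simp only [Matrix.mul_apply, Finset.sum_mul, Finset.mul_sum]
    rw [Finset.sum_comm]
    simp only [mul_assoc]
  simp only [sub_mul, add_mul, Finset.sum_sub_distrib, Finset.sum_add_distrib, e] at key
  simp only [Pi.add_apply, Pi.sub_apply, fderiv_omF_apply h hp, omF_apply]
  have e1 : ∀ (a b : ℝ) (f g : Fin 6 → ℝ),
      ∑ j, (a * f j + b * g j) * v j = a * ∑ j, f j * v j + b * ∑ j, g j * v j := by
    intro a b f g
    simp only [add_mul, Finset.sum_add_distrib, Finset.mul_sum, mul_assoc]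
  have e2 : ∀ (a b : ℝ) (f g h : Fin 6 → ℝ),
      ∑ j, f j * -(a * g j + b * h j) = -(a * ∑ j, f j * g j + b * ∑ j, f j * h j) := by
    intro a b f g h
    simp only [Finset.mul_sum, ← Finset.sum_add_distrib, ← Finset.sum_neg_distrib]
    exact Finset.sum_congr rfl fun j _ => by ring
  simp only [e1, e2]
  linear_combination (-(k.1 * l.2 - k.2 * l.1)) * key

/-- Vectors annihilated by `V` are annihilated by the curvature. -/
lemma curv_omF (h : GoodConn U Ω V) {p : ℝ × ℝ} (hp : p ∈ U) {v : Fin 6 → ℝ}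
    (hv : ∑ j, V p j * v j = 0) (k l : ℝ × ℝ) :
    fderiv ℝ (omF Ω) p k l v - fderiv ℝ (omF Ω) p l k v + omF Ω p l (omF Ω p k v)
      - omF Ω p k (omF Ω p l v) = 0 := by
  ext i
  rw [curv_omF_apply h hp, hv]
  simp

end

/-! ### Parallel sections -/

section

open Matrix Topology

variable {U : Set (ℝ × ℝ)} {Ω : Fin 2 → ℝ × ℝ → Matrix (Fin 6) (Fin 6) ℝ}
  {V : ℝ × ℝ → Fin 6 → ℝ}

/-- `Ψ` is parallel on `S`: `dΨ = -(Ω₁ dx + Ω₂ dy) Ψ` at every point of `S`. -/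
def IsPar (Ω : Fin 2 → ℝ × ℝ → Matrix (Fin 6) (Fin 6) ℝ) (S : Set (ℝ × ℝ))
    (Ψ : ℝ × ℝ → Fin 6 → ℝ) : Prop :=
  ∀ q ∈ S, HasFDerivAt Ψ ((omF Ω q).flip (Ψ q)) q

/-- `d(W · g) = (D W) · g` along a straight line on which `g` solves the parallel transport
equation. -/
lemma pairing_hasDeriv {W : ℝ × ℝ → Fin 6 → ℝ} {p k : ℝ × ℝ} {g : ℝ → Fin 6 → ℝ} {s : Set ℝ} {t : ℝ}
    (hW : ∀ i, DifferentiableAt ℝ (fun q => W q i) (p + t • k))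
    (hg : HasDerivWithinAt g (omF Ω (p + t • k) k (g t)) s t) :
    HasDerivWithinAt (fun τ => ∑ i, W (p + τ • k) i * g τ i)
      (k.1 * ∑ i, covD Ω 0 W (p + t • k) i * g t i
        + k.2 * ∑ i, covD Ω 1 W (p + t • k) i * g t i) s t := by
  have hγ : HasDerivWithinAt (fun τ : ℝ => p + τ • k) k s t := by
    simpa using (((hasDerivAt_id t).smul_const k).const_add p).hasDerivWithinAt
  have h1 : ∀ i, HasDerivWithinAt (fun τ : ℝ => W (p + τ • k) i)
      (k.1 * pd 0 (fun q => W q i) (p + t • k) + k.2 * pd 1 (fun q => W q i) (p + t • k)) s t := by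
    intro i
    rw [← fderiv_eq_pd (hW i)]
    exact (hW i).hasFDerivAt.comp_hasDerivWithinAt t hγ
  have h2 := fun i => hasDerivWithinAt_pi.1 hg i
  refine (HasDerivWithinAt.fun_sum fun i (_ : i ∈ Finset.univ) => (h1 i).mul (h2 i)).congr_deriv ?_
  simp only [omF_apply, covD_apply, Finset.sum_add_distrib, sub_mul, Finset.sum_sub_distrib, add_mul,
    mul_sub, Finset.mul_sum, mul_neg, mul_add, Finset.sum_mul, Finset.sum_neg_distrib]
  rw [Finset.sum_comm (f := fun i j => k.1 * (W (p + t • k) j * Ω 0 (p + t • k) j i * g t i)),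
    Finset.sum_comm (f := fun i j => k.2 * (W (p + t • k) j * Ω 1 (p + t • k) j i * g t i))]
  have e : ∀ (c : ℝ) (M : Matrix (Fin 6) (Fin 6) ℝ) (w v : Fin 6 → ℝ),
      ∑ i, ∑ j, w i * (c * (M i j * v j)) = ∑ i, ∑ j, c * (w i * M i j * v j) := fun c M w v =>
    Finset.sum_congr rfl fun i _ => Finset.sum_congr rfl fun j _ => by ring
  simp only [e, mul_assoc]
  ring

/-- A parallel section solves the parallel transport equation along straight lines. -/
lemma IsPar.hasDerivAt {S : Set (ℝ × ℝ)} {Ψ : ℝ × ℝ → Fin 6 → ℝ} (hΨ : IsPar Ω S Ψ) {p k : ℝ × ℝ}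
    {t : ℝ} (ht : p + t • k ∈ S) :
    HasDerivAt (fun τ : ℝ => Ψ (p + τ • k)) (omF Ω (p + t • k) k (Ψ (p + t • k))) t := by
  have hγ : HasDerivAt (fun τ : ℝ => p + τ • k) k t := by
    simpa using ((hasDerivAt_id t).smul_const k).const_add p
  exact (hΨ _ ht).comp_hasDerivAt t hγ

lemma clm_comp_hasFDerivAt {X Y Z : Type*} [NormedAddCommGroup X] [NormedSpace ℝ X]
    [NormedAddCommGroup Y] [NormedSpace ℝ Y] [NormedAddCommGroup Z] [NormedSpace ℝ Z] (Φ : Y →L[ℝ] Z)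
    {f : X → Y} {f' : X →L[ℝ] Y} {p : X} (hf : HasFDerivAt f f' p) :
    HasFDerivAt (fun q => Φ (f q)) (Φ.comp f') p := Φ.hasFDerivAt.comp p hf

lemma hasFDerivAt_flip {X E F G : Type*} [NormedAddCommGroup X] [NormedSpace ℝ X]
    [NormedAddCommGroup E] [NormedSpace ℝ E] [NormedAddCommGroup F] [NormedSpace ℝ F]
    [NormedAddCommGroup G] [NormedSpace ℝ G] {f : X → E →L[ℝ] F →L[ℝ] G}
    {f' : X →L[ℝ] E →L[ℝ] F →L[ℝ] G} {p : X} (hf : HasFDerivAt f f' p) :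
    ∃ L : X →L[ℝ] F →L[ℝ] E →L[ℝ] G, (∀ x, L x = (f' x).flip) ∧
      HasFDerivAt (fun q => (f q).flip) L p := by
  let Φ : (E →L[ℝ] F →L[ℝ] G) →L[ℝ] (F →L[ℝ] E →L[ℝ] G) :=
    (ContinuousLinearMap.flipₗᵢ ℝ E F G).toContinuousLinearEquiv.toContinuousLinearMap
  have := clm_comp_hasFDerivAt (X := X) (Y := E →L[ℝ] F →L[ℝ] G) (Z := F →L[ℝ] E →L[ℝ] G) Φ hf
  exact ⟨Φ.comp f', fun x => rfl, this⟩

/-- A parallel section is annihilated by `V` and by all its iterated derivatives. -/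
lemma IsPar.iterD_eq_zero (h : GoodConn U Ω V) {S : Set (ℝ × ℝ)} (hS : IsOpen S) (hSU : S ⊆ U)
    {Ψ : ℝ × ℝ → Fin 6 → ℝ} (hΨ : IsPar Ω S Ψ) (l : List (Fin 2)) :
    ∀ p ∈ S, ∑ i, iterD Ω V l p i * Ψ p i = 0 := by
  induction l with
  | nil =>
    intro p hp
    have hω := (analytic_omF h p (hSU hp)).differentiableAt.hasFDerivAt
    have h1 : ∀ᶠ q in 𝓝 p, HasFDerivAt Ψ ((omF Ω q).flip (Ψ q)) q := by
      filter_upwards [hS.mem_nhds hp] with q hq using hΨ q hq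
    obtain ⟨L, hL, h2⟩ := hasFDerivAt_flip hω
    have h3 := second_derivative_symmetric_of_eventually h1 (h2.clm_apply (hΨ p hp)) (1, 0) (0, 1)
    have h4 := curv_omF_apply h (hSU hp) (Ψ p) (1, 0) (0, 1) 5
    have h5 := congrFun h3 5
    simp [hL] at h4 h5
    change ∑ i, V p i * Ψ p i = 0
    linarith
  | cons a l ih =>
    intro p hp
    have h1 := pairing_hasDeriv (Ω := Ω) (W := iterD Ω V l) (p := p) (k := dirVec a)
      (g := fun τ => Ψ (p + τ • dirVec a)) (s := Set.univ) (t := 0)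
      (fun i => (iterD_ana h l i _ (by simpa using hSU hp)).differentiableAt)
      (hΨ.hasDerivAt (by simpa using hp)).hasDerivWithinAt
    have hγ : Filter.Tendsto (fun τ : ℝ => p + τ • dirVec a) (𝓝 0) (𝓝 p) := by
      have : Continuous (fun τ : ℝ => p + τ • dirVec a) := by fun_prop
      simpa using this.tendsto 0
    have h2 : HasDerivAt (fun τ : ℝ => ∑ i, iterD Ω V l (p + τ • dirVec a) i
        * Ψ (p + τ • dirVec a) i) 0 0 := by
      refine (hasDerivAt_const (0 : ℝ) (0 : ℝ)).congr_of_eventuallyEq ?_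
      filter_upwards [hγ.eventually (hS.mem_nhds hp)] with τ hτ using ih _ hτ
    have h3 := (hasDerivWithinAt_univ.1 h1).unique h2
    change ∑ i, covD Ω a (iterD Ω V l) p i * Ψ p i = 0
    fin_cases a <;> simpa [dirVec] using h3

/-- Grönwall's inequality along a segment. -/
lemma IsPar.eq_zero_of_segment (h : GoodConn U Ω V) {S : Set (ℝ × ℝ)} (hSU : S ⊆ U)
    {Ψ : ℝ × ℝ → Fin 6 → ℝ} (hΨ : IsPar Ω S Ψ) {p q : ℝ × ℝ} (hseg : segment ℝ p q ⊆ S)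
    (hp : Ψ p = 0) : Ψ q = 0 := by
  have hγ : ∀ t ∈ Set.Icc (0 : ℝ) 1, p + t • (q - p) ∈ S := fun t ht =>
    hseg (segment_eq_image' ℝ p q ▸ ⟨t, ht, rfl⟩)
  have hcont : ContinuousOn (fun t : ℝ => omF Ω (p + t • (q - p)) (q - p)) (Set.Icc 0 1) := by
    have : ContinuousOn (fun t : ℝ => omF Ω (p + t • (q - p))) (Set.Icc 0 1) :=
      (analytic_omF h).continuousOn.comp (by fun_prop) fun t ht => hSU (hγ t ht)
    exact this.clm_apply continuousOn_const
  obtain ⟨C, hC⟩ := isCompact_Icc.exists_bound_of_continuousOn hcont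
  have := eq_zero_of_abs_deriv_le_mul_abs_self_of_eq_zero_right (K := C)
    (f := fun t : ℝ => Ψ (p + t • (q - p))) (a := 0) (b := 1)
    (fun t ht => (hΨ.hasDerivAt (hγ t ht)).continuousAt.continuousWithinAt)
    (fun t ht => (hΨ.hasDerivAt (hγ t (Set.Ico_subset_Icc_self ht))).hasDerivWithinAt)
    (by simpa using hp)
    (fun t ht => (ContinuousLinearMap.le_opNorm _ _).trans (by
      gcongr; exact hC t (Set.Ico_subset_Icc_self ht))) 1 (by simp)
  simpa using this

lemma IsPar.sum {ι : Type*} [Fintype ι] {S : Set (ℝ × ℝ)} {Ψ : ι → ℝ × ℝ → Fin 6 → ℝ}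
    (hΨ : ∀ i, IsPar Ω S (Ψ i)) (c : ι → ℝ) : IsPar Ω S (fun q => ∑ i, c i • Ψ i q) := by
  intro q hq
  refine (HasFDerivAt.fun_sum fun i (_ : i ∈ Finset.univ) =>
    (hΨ i q hq).const_smul (c i)).congr_fderiv ?_
  simp

lemma IsPar.sub {S : Set (ℝ × ℝ)} {Ψ Φ : ℝ × ℝ → Fin 6 → ℝ}
    (hΨ : IsPar Ω S Ψ) (hΦ : IsPar Ω S Φ) : IsPar Ω S (fun q => Ψ q - Φ q) := by
  intro q hq
  refine ((hΨ q hq).fun_sub (hΦ q hq)).congr_fderiv ?_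
  simp

lemma IsPar.mono {S T : Set (ℝ × ℝ)} (hST : S ⊆ T) {Ψ : ℝ × ℝ → Fin 6 → ℝ}
    (hΨ : IsPar Ω T Ψ) : IsPar Ω S Ψ := fun q hq => hΨ q (hST hq)

lemma IsPar.eqOn_convex (h : GoodConn U Ω V) {S : Set (ℝ × ℝ)} (hSU : S ⊆ U) (hS : Convex ℝ S)
    {Ψ Φ : ℝ × ℝ → Fin 6 → ℝ} (hΨ : IsPar Ω S Ψ) (hΦ : IsPar Ω S Φ) {p : ℝ × ℝ} (hp : p ∈ S)
    (hpe : Ψ p = Φ p) : Set.EqOn Ψ Φ S := fun q hq => sub_eq_zero.1 <|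
  (hΨ.sub hΦ).eq_zero_of_segment h hSU (hS.segment_subset hp hq) (sub_eq_zero.2 hpe)

/-- Two parallel sections on a connected open set that agree at one point agree everywhere. -/
lemma IsPar.eqOn (h : GoodConn U Ω V) (hc : IsPreconnected U) {Ψ Φ : ℝ × ℝ → Fin 6 → ℝ}
    (hΨ : IsPar Ω U Ψ) (hΦ : IsPar Ω U Φ) {p : ℝ × ℝ} (hp : p ∈ U) (hpe : Ψ p = Φ p) :
    Set.EqOn Ψ Φ U := by
  have key : ∀ q ∈ U, ∃ B : Set (ℝ × ℝ), IsOpen B ∧ q ∈ B ∧ B ⊆ U ∧ Convex ℝ B := by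
    intro q hq
    obtain ⟨ε, hε, hb⟩ := Metric.isOpen_iff.1 h.isOpen q hq
    exact ⟨_, Metric.isOpen_ball, Metric.mem_ball_self hε, hb, convex_ball q ε⟩
  have o1 : IsOpen {q | q ∈ U ∧ Ψ q = Φ q} := by
    refine isOpen_iff_mem_nhds.2 fun q hq => ?_
    obtain ⟨B, hB, hqB, hBU, hBc⟩ := key q hq.1
    exact Filter.mem_of_superset (hB.mem_nhds hqB) fun x hx =>
      ⟨hBU hx, (hΨ.mono hBU).eqOn_convex h hBU hBc (hΦ.mono hBU) hqB hq.2 hx⟩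
  have o2 : IsOpen {q | q ∈ U ∧ Ψ q ≠ Φ q} := by
    refine isOpen_iff_mem_nhds.2 fun q hq => ?_
    obtain ⟨B, hB, hqB, hBU, hBc⟩ := key q hq.1
    exact Filter.mem_of_superset (hB.mem_nhds hqB) fun x hx =>
      ⟨hBU hx, fun hxe => hq.2 ((hΨ.mono hBU).eqOn_convex h hBU hBc (hΦ.mono hBU) hx hxe hqB)⟩
  intro q hq
  by_contra hne
  obtain ⟨x, -, hx1, hx2⟩ := hc _ _ o1 o2 (fun x hx => by
    by_cases e : Ψ x = Φ x
    · exact Or.inl ⟨hx, e⟩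
    · exact Or.inr ⟨hx, e⟩) ⟨p, hp, hp, hpe⟩ ⟨q, hq, hq, hne⟩
  exact hx2.2 hx1.2

end

/-! ### Local existence -/

section

open Matrix Topology

variable {U : Set (ℝ × ℝ)} {Ω : Fin 2 → ℝ × ℝ → Matrix (Fin 6) (Fin 6) ℝ}
  {V : ℝ × ℝ → Fin 6 → ℝ}

/-- Parallel transport along a line preserves the annihilator of a frame `w` whose span is
stable under `D`: the pairings `w_j · g` satisfy a homogeneous linear ODE. -/
lemma transport_annihilates {r : ℕ} {N : Set (ℝ × ℝ)} {w : Fin r → ℝ × ℝ → Fin 6 → ℝ}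
    {C : Fin 2 → Fin r → Fin r → ℝ × ℝ → ℝ} (hw : ∀ j, AnaV N (w j))
    (hC : ∀ a j k, ContinuousOn (C a j k) N)
    (hD : ∀ a j, ∀ p ∈ N, covD Ω a (w j) p = ∑ k, C a j k p • w k p)
    {p k : ℝ × ℝ} (hseg : ∀ t ∈ Set.Icc (0 : ℝ) 1, p + t • k ∈ N) {g : ℝ → Fin 6 → ℝ}
    (hg : ∀ t ∈ Set.Icc (0 : ℝ) 1,
      HasDerivWithinAt g (omF Ω (p + t • k) k (g t)) (Set.Icc 0 1) t)
    (h0 : ∀ j, ∑ i, w j p i * g 0 i = 0) :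
    ∀ t ∈ Set.Icc (0 : ℝ) 1, ∀ j, ∑ i, w j (p + t • k) i * g t i = 0 := by
  set u : ℝ → Fin r → ℝ := fun t j => ∑ i, w j (p + t • k) i * g t i with hu
  set c : Fin r → Fin r → ℝ → ℝ := fun j m t =>
    k.1 * C 0 j m (p + t • k) + k.2 * C 1 j m (p + t • k) with hc
  have hcc : ∀ j m, ContinuousOn (c j m) (Set.Icc 0 1) := by
    intro j m
    have e : ∀ a, ContinuousOn (fun t : ℝ => C a j m (p + t • k)) (Set.Icc 0 1) := fun a =>
      (hC a j m).comp (by fun_prop) hseg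
    exact (continuousOn_const.mul (e 0)).add (continuousOn_const.mul (e 1))
  obtain ⟨B, hB⟩ := isCompact_Icc.exists_bound_of_continuousOn
    (f := fun t => ∑ j, ∑ m, |c j m t|)
    (continuousOn_finsetSum _ fun j _ => continuousOn_finsetSum _ fun m _ => (hcc j m).abs)
  have hder : ∀ t ∈ Set.Icc (0 : ℝ) 1,
      HasDerivWithinAt u (fun j => ∑ m, c j m t * u t m) (Set.Icc 0 1) t := by
    intro t ht
    rw [hasDerivWithinAt_pi]
    intro j
    refine (pairing_hasDeriv (fun i => (hw j i _ (hseg t ht)).differentiableAt)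
      (hg t ht)).congr_deriv ?_
    have e : ∀ a, ∑ i, covD Ω a (w j) (p + t • k) i * g t i
        = ∑ m, C a j m (p + t • k) * u t m := by
      intro a
      rw [hD a j _ (hseg t ht)]
      simp only [Finset.sum_apply, Pi.smul_apply, smul_eq_mul, Finset.sum_mul, hu, Finset.mul_sum]
      rw [Finset.sum_comm]
      simp only [mul_assoc]
    rw [e, e, Finset.mul_sum, Finset.mul_sum, ← Finset.sum_add_distrib]
    exact Finset.sum_congr rfl fun m _ => by simp only [hc]; ring
  have hz := eq_zero_of_abs_deriv_le_mul_abs_self_of_eq_zero_right (K := B) (f := u)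
    (f' := fun t j => ∑ m, c j m t * u t m) (a := 0) (b := 1)
    (fun t ht => (hder t ht).continuousWithinAt)
    (fun t ht => ((hder t (Set.Ico_subset_Icc_self ht)).mono_of_mem_nhdsWithin
      (Icc_mem_nhdsGE_of_mem ht)))
    (by funext j; simpa [hu] using h0 j) (fun t ht => by
      have hbt := hB t (Set.Ico_subset_Icc_self ht)
      rw [Real.norm_of_nonneg (by positivity)] at hbt
      have hB0 : 0 ≤ B := le_trans (by positivity) hbt
      rw [pi_norm_le_iff_of_nonneg (by positivity)]
      intro j
      calc ‖∑ m, c j m t * u t m‖ ≤ ∑ m, |c j m t| * ‖u t‖ := by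
            refine (norm_sum_le _ _).trans (Finset.sum_le_sum fun m _ => ?_)
            rw [norm_mul]
            exact mul_le_mul_of_nonneg_left (norm_le_pi_norm (u t) m) (abs_nonneg _)
        _ = (∑ m, |c j m t|) * ‖u t‖ := by rw [Finset.sum_mul]
        _ ≤ (∑ j, ∑ m, |c j m t|) * ‖u t‖ := by
            refine mul_le_mul_of_nonneg_right ?_ (norm_nonneg _)
            exact Finset.single_le_sum (f := fun j => ∑ m, |c j m t|)
              (fun _ _ => by positivity) (Finset.mem_univ j)
        _ ≤ B * ‖u t‖ := by gcongr)
  exact fun t ht j => congrFun (hz t ht) j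

/-- Local existence: near `p₀`, every vector annihilated by the stable span at `p₀` is the value
of a parallel section, on a ball that does not depend on the vector. -/
lemma local_exists (h : GoodConn U Ω V) {n r : ℕ} (hn : 0 < n)
    (hr : ∀ p ∈ U, Module.finrank ℝ (lowSpan Ω V n p) = r)
    (hst : ∀ p ∈ U, lowSpan Ω V (n + 1) p = lowSpan Ω V n p) {p₀ : ℝ × ℝ} (hp₀ : p₀ ∈ U) :
    ∃ δ > 0, Metric.ball p₀ δ ⊆ U ∧ ∀ v : Fin 6 → ℝ,
      (∀ W ∈ lowSpan Ω V n p₀, ∑ i, W i * v i = 0) →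
      ∃ Ψ, Ψ p₀ = v ∧ IsPar Ω (Metric.ball p₀ δ) Ψ := by
  obtain ⟨N, hN, hpN, hNU, w, C, hw, hC, hspan, hD⟩ := parallel_frame h hn hr hst hp₀
  obtain ⟨M, hM, ε, hε, hεU, hM1, hM2, hM3⟩ := local_bounds h.isOpen (analytic_omF h) hp₀
  obtain ⟨η, hη, hηN⟩ := Metric.isOpen_iff.1 hN p₀ hpN
  obtain ⟨δ, hδ, hδε, hδη, hδ1, hδM⟩ : ∃ δ > 0, δ ≤ ε ∧ δ ≤ η ∧ δ ≤ 1 ∧ M * δ ≤ 1 / 2 := by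
    refine ⟨min (min ε η) (min 1 (1 / (2 * M))), by positivity, (min_le_left _ _).trans
      (min_le_left _ _), (min_le_left _ _).trans (min_le_right _ _), (min_le_right _ _).trans
      (min_le_left _ _), ?_⟩
    calc M * min (min ε η) (min 1 (1 / (2 * M))) ≤ M * (1 / (2 * M)) := by
          gcongr; exact (min_le_right _ _).trans (min_le_right _ _)
      _ = 1 / 2 := by field_simp
  have bε : Metric.ball p₀ δ ⊆ Metric.ball p₀ ε := Metric.ball_subset_ball hδε
  have bN : Metric.ball p₀ δ ⊆ N := (Metric.ball_subset_ball hδη).trans hηN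
  have bU := bN.trans hNU
  refine ⟨δ, hδ, bU, fun v hv => ?_⟩
  have hseg : ∀ q ∈ Metric.ball p₀ δ, ∀ t ∈ Set.Icc (0 : ℝ) 1,
      p₀ + t • (q - p₀) ∈ Metric.ball p₀ δ := by
    intro q hq t ht
    rw [mem_ball_iff_norm] at hq ⊢
    rw [add_sub_cancel_left, norm_smul, Real.norm_of_nonneg ht.1]
    exact (mul_le_of_le_one_left (norm_nonneg _) ht.2).trans_lt hq
  have hode : ∀ q : ℝ × ℝ, ∃ g : ℝ → Fin 6 → ℝ, q ∈ Metric.ball p₀ δ → g 0 = v ∧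
      ∀ t ∈ Set.Icc (0 : ℝ) 1, HasDerivWithinAt g (omF Ω (p₀ + t • (q - p₀)) (q - p₀) (g t))
        (Set.Icc 0 1) t := by
    intro q
    by_cases hq : q ∈ Metric.ball p₀ δ
    · obtain ⟨g, hg⟩ := radial_ode ((analytic_omF h).continuousOn.mono bU)
        (fun x hx => hM1 x (bε hx)) (p₀ := p₀) (k := q - p₀)
        (le_trans (by gcongr; exact (mem_ball_iff_norm.1 hq).le) hδM) (hseg q hq) v
      exact ⟨g, fun _ => hg⟩
    · exact ⟨0, fun hq' => absurd hq' hq⟩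
  choose g hg using hode
  have hkill : ∀ q ∈ Metric.ball p₀ δ, ∀ t ∈ Set.Icc (0 : ℝ) 1,
      ∑ i, V (p₀ + t • (q - p₀)) i * g q t i = 0 := by
    intro q hq t ht
    have hw0 : ∀ j, ∑ i, w j p₀ i * g q 0 i = 0 := by
      intro j
      rw [(hg q hq).1]
      exact hv _ (by rw [hspan p₀ hpN]; exact Submodule.subset_span ⟨j, rfl⟩)
    have hwt := transport_annihilates (fun j i x hx => hw j i x (hNU hx)) hC hD
      (fun t ht => bN (hseg q hq t ht)) (hg q hq).2 hw0 t ht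
    have hVm : V (p₀ + t • (q - p₀)) ∈ lowSpan Ω V n (p₀ + t • (q - p₀)) :=
      iterD_mem_lowSpan (l := []) hn _
    rw [hspan _ (bN (hseg q hq t ht))] at hVm
    generalize V (p₀ + t • (q - p₀)) = W at hVm ⊢
    induction hVm using Submodule.span_induction with
    | mem x hx => obtain ⟨j, rfl⟩ := hx; exact hwt j
    | zero => simp
    | add x y _ _ hx hy => simp [add_mul, Finset.sum_add_distrib, hx, hy]
    | smul a x _ hx => simp [mul_assoc, ← Finset.mul_sum, hx]
  refine ⟨fun q => g q 1, ?_, fun q hq => ?_⟩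
  · have hp := hg p₀ (Metric.mem_ball_self hδ)
    have := constant_of_has_deriv_right_zero (f := g p₀) (a := 0) (b := 1)
      (fun t ht => (hp.2 t ht).continuousWithinAt) (fun t ht => by
        have := (hp.2 t (Set.Ico_subset_Icc_self ht)).mono_of_mem_nhdsWithin
          (Icc_mem_nhdsGE_of_mem ht)
        simpa using this) 1 (by simp)
    exact this.trans hp.1
  · have hcurv : ∀ q ∈ Metric.ball p₀ δ, ∀ t ∈ Set.Icc (0 : ℝ) 1, ∀ k : ℝ × ℝ, _ = _ :=
      fun q hq t ht k => curv_omF h (bU (hseg q hq t ht)) (hkill q hq t ht) (q - p₀) k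
    refine radial_hasFDerivAt (ω := omF Ω) (dω := fderiv ℝ (omF Ω)) (v := v) (g := g) hδ1 hM
      (fun x hx => (analytic_omF h x (bU hx)).differentiableAt.hasFDerivAt)
      (fun x hx => hM1 x (bε hx)) (fun x hx y hy => hM2 x (bε hx) y (bε hy))
      (fun x hx y hy => hM3 x (bε hx) y (bε hy)) (fun q hq => (hg q hq).1)
      (fun q hq => (hg q hq).2)
      (fun q hq t ht k => ?_) hq
    have := hcurv q hq t ht k
    rw [← this]

end

/-! ### Monodromy -/

section

open Matrix Topology

/-- Monodromy: on a simply connected space, local systems of sections extend globally. The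
sections `T i c`, `c : F`, are defined on the open sets `B i`; at each point of `B i` their values
run bijectively over the set `ann x`, and the coincidence set of two of them is open. Then every
element of `ann x₀` is the value of a global section that is locally one of the `T i c`. It is
obtained by lifting the identity to the total space of the bundle with discrete fibre `F`. -/
lemma monodromy {X F E ι : Type*} [TopologicalSpace X] [SimplyConnectedSpace X]
    [LocallyPathConnectedSpace X] (B : ι → Set X) (hB : ∀ i, IsOpen (B i)) (idx : X → ι)
    (hidx : ∀ x, x ∈ B (idx x)) (T : ι → F → X → E) (ann : X → Set E)
    (hbij : ∀ i, ∀ x ∈ B i, Set.BijOn (fun c => T i c x) Set.univ (ann x))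
    (hloc : ∀ i j c d, IsOpen {x | x ∈ B i ∧ x ∈ B j ∧ T i c x = T j d x})
    (x₀ : X) {v₀ : E} (hv₀ : v₀ ∈ ann x₀) :
    ∃ Ψ : X → E, Ψ x₀ = v₀ ∧ ∀ x, ∃ i c, x ∈ B i ∧ ∀ᶠ y in 𝓝 x, Ψ y = T i c y := by
  let _ : TopologicalSpace F := ⊥
  have : DiscreteTopology F := ⟨rfl⟩
  have hex : ∀ i j x c, ∃ d, x ∈ B i → x ∈ B j → T j d x = T i c x := by
    intro i j x c
    by_cases hx : x ∈ B i ∧ x ∈ B j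
    · obtain ⟨d, -, hd⟩ := (hbij j x hx.2).surjOn ((hbij i x hx.1).mapsTo (Set.mem_univ c))
      exact ⟨d, fun _ _ => hd⟩
    · exact ⟨c, fun h1 h2 => absurd ⟨h1, h2⟩ hx⟩
  choose φ hφ using hex
  have hinj : ∀ i x, x ∈ B i → ∀ c d, T i c x = T i d x → c = d := fun i x hx c d h =>
    (hbij i x hx).injOn (Set.mem_univ c) (Set.mem_univ d) h
  let Z : FiberBundleCore ι X F :=
    { baseSet := B
      isOpen_baseSet := hB
      indexAt := idx
      mem_baseSet_at := hidx
      coordChange := φ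
      coordChange_self := fun i x hx v => hinj i x hx _ _ (hφ i i x v hx hx)
      continuousOn_coordChange := by
        rintro i j ⟨x, c⟩ ⟨⟨hi, hj⟩, -⟩
        refine ContinuousAt.continuousWithinAt ?_
        refine (continuousAt_const (y := φ i j x c)).congr ?_
        have h1 : {y | y ∈ B i ∧ y ∈ B j ∧ T i c y = T j (φ i j x c) y} ∈ 𝓝 x :=
          (hloc i j c (φ i j x c)).mem_nhds ⟨hi, hj, (hφ i j x c hi hj).symm⟩
        have h2 : ({c} : Set F) ∈ 𝓝 c := (isOpen_discrete _).mem_nhds rfl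
        filter_upwards [prod_mem_nhds h1 h2]
        rintro ⟨y, d⟩ ⟨⟨hyi, hyj, hy⟩, rfl⟩
        exact hinj j y hyj _ _ (hy.symm.trans (hφ i j y d hyi hyj).symm)
      coordChange_comp := by
        rintro i j k x ⟨⟨hi, hj⟩, hk⟩ v
        refine hinj k x hk _ _ ?_
        rw [hφ j k x _ hj hk, hφ i j x _ hi hj, hφ i k x _ hi hk] }
  obtain ⟨c₀, -, hc₀⟩ := (hbij (idx x₀) x₀ (hidx x₀)).surjOn hv₀
  have hcov : IsCoveringMap (Bundle.TotalSpace.proj : Bundle.TotalSpace F Z.Fiber → X) :=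
    FiberBundle.isCoveringMap
  obtain ⟨s, ⟨hs0, hs⟩, -⟩ := hcov.existsUnique_continuousMap_lifts (ContinuousMap.id X) x₀
    ⟨x₀, c₀⟩ rfl
  have hproj : ∀ y, (s y).proj = y := fun y => congrFun hs y
  let f : X → F := fun y => (s y).snd
  refine ⟨fun y => T (idx (s y).proj) (f y) (s y).proj, ?_, fun x => ?_⟩
  · have key : ∀ e : Bundle.TotalSpace F Z.Fiber, e = ⟨x₀, c₀⟩ →
        T (idx e.proj) (e.snd : F) e.proj = v₀ := by
      rintro _ rfl
      exact hc₀
    exact key _ hs0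
  · let τ := Z.localTriv (idx x)
    refine ⟨idx x, (τ (s x)).2, hidx x, ?_⟩
    have hsrc : s x ∈ τ.source := by
      rw [FiberBundleCore.mem_localTriv_source]
      change (s x).proj ∈ B (idx x)
      rw [hproj]; exact hidx x
    have hc : ContinuousAt (fun y => (τ (s y)).2) x :=
      (continuous_snd.continuousAt).comp
        (ContinuousAt.comp (f := s) (g := τ) (τ.continuousAt hsrc) s.continuous.continuousAt)
    have h1 : ∀ᶠ y in 𝓝 x, (τ (s y)).2 = (τ (s x)).2 :=
      hc.eventually ((isOpen_discrete {(τ (s x)).2}).mem_nhds rfl)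
    filter_upwards [h1, (hB (idx x)).mem_nhds (hidx x)] with y hy hyB
    rw [← hy]
    change _ = T (idx x) (φ (idx (s y).proj) (idx x) (s y).proj (f y)) y
    rw [hproj]
    exact (hφ _ _ y (f y) (hidx y) hyB).symm

end

/-! ### Annihilators and global existence -/

section

open Matrix Topology

variable {U : Set (ℝ × ℝ)} {Ω : Fin 2 → ℝ × ℝ → Matrix (Fin 6) (Fin 6) ℝ}
  {V : ℝ × ℝ → Fin 6 → ℝ}

/-- The vectors `v` with `W · v = 0` for all `W` in the span of the derivatives of `V` of order
less than `n` at `p`. -/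
noncomputable def annih (Ω : Fin 2 → ℝ × ℝ → Matrix (Fin 6) (Fin 6) ℝ) (V : ℝ × ℝ → Fin 6 → ℝ)
    (n : ℕ) (p : ℝ × ℝ) : Submodule ℝ (Fin 6 → ℝ) :=
  ((lowSpan Ω V n p).map (dotProductEquiv ℝ (Fin 6)).toLinearMap).dualCoannihilator

lemma mem_annih {n : ℕ} {p : ℝ × ℝ} {v : Fin 6 → ℝ} :
    v ∈ annih Ω V n p ↔ ∀ W ∈ lowSpan Ω V n p, ∑ i, W i * v i = 0 := by
  simp only [annih, Submodule.mem_dualCoannihilator, Submodule.mem_map, forall_exists_index,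
    and_imp, forall_apply_eq_imp_iff₂]
  rfl

lemma finrank_annih (n : ℕ) (p : ℝ × ℝ) : Module.finrank ℝ (annih Ω V n p)
    = 6 - Module.finrank ℝ (lowSpan Ω V n p) := by
  have h := Subspace.finrank_add_finrank_dualCoannihilator_eq
    ((lowSpan Ω V n p).map (dotProductEquiv ℝ (Fin 6)).toLinearMap)
  rw [LinearEquiv.finrank_map_eq, Module.finrank_fin_fun] at h
  change _ + Module.finrank ℝ (annih Ω V n p) = 6 at h
  omega

/-- The values of parallel sections lie in the annihilator of the derivatives of `V`. -/
lemma IsPar.mem_annih (h : GoodConn U Ω V) {S : Set (ℝ × ℝ)} (hS : IsOpen S) (hSU : S ⊆ U)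
    {Ψ : ℝ × ℝ → Fin 6 → ℝ} (hΨ : IsPar Ω S Ψ) (n : ℕ) {p : ℝ × ℝ} (hp : p ∈ S) :
    Ψ p ∈ annih Ω V n p := by
  rw [_root_.mem_annih]
  intro W hW
  rw [lowSpan_eq_range] at hW
  induction hW using Submodule.span_induction with
  | mem x hx => obtain ⟨l, rfl⟩ := hx; exact hΨ.iterD_eq_zero h hS hSU _ p hp
  | zero => simp
  | add x y _ _ hx hy => simp [add_mul, Finset.sum_add_distrib, hx, hy]
  | smul a x _ hx => simp [mul_assoc, ← Finset.mul_sum, hx]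

/-- Near each point the parallel sections form a vector space with coordinates in `Fin k → ℝ`,
and evaluation at any point of the ball is a bijection onto the annihilator. -/
lemma local_triv (h : GoodConn U Ω V) {n r k : ℕ} (hn : 0 < n)
    (hr : ∀ p ∈ U, Module.finrank ℝ (lowSpan Ω V n p) = r)
    (hst : ∀ p ∈ U, lowSpan Ω V (n + 1) p = lowSpan Ω V n p) (hk : k = 6 - r)
    {p₀ : ℝ × ℝ} (hp₀ : p₀ ∈ U) :
    ∃ δ > 0, Metric.ball p₀ δ ⊆ U ∧ ∃ T : (Fin k → ℝ) → ℝ × ℝ → Fin 6 → ℝ,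
      (∀ c, IsPar Ω (Metric.ball p₀ δ) (T c)) ∧
      ∀ x ∈ Metric.ball p₀ δ, Set.BijOn (fun c => T c x) Set.univ (annih Ω V n x) := by
  obtain ⟨δ, hδ, hδU, hex⟩ := local_exists h hn hr hst hp₀
  have hdim : ∀ x ∈ U, Module.finrank ℝ (annih Ω V n x) = k := fun x hx => by
    rw [finrank_annih, hr x hx, hk]
  let b := Module.finBasisOfFinrankEq ℝ (annih Ω V n p₀) (hdim p₀ hp₀)
  choose Ψ hΨ0 hΨ using fun m => hex (b m) (_root_.mem_annih.1 (b m).2)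
  let T : (Fin k → ℝ) → ℝ × ℝ → Fin 6 → ℝ := fun c x => ∑ m, c m • Ψ m x
  have hT : ∀ c, IsPar Ω (Metric.ball p₀ δ) (T c) := fun c => IsPar.sum hΨ c
  refine ⟨δ, hδ, hδU, T, hT, fun x hx => ?_⟩
  let L : (Fin k → ℝ) →ₗ[ℝ] annih Ω V n x :=
    { toFun := fun c => ⟨T c x, (hT c).mem_annih h Metric.isOpen_ball hδU n hx⟩
      map_add' := fun c d => by
        ext1; simp only [T, Pi.add_apply, add_smul, Finset.sum_add_distrib]; rfl
      map_smul' := fun a c => by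
        ext1
        simp only [T, Pi.smul_apply, smul_eq_mul, mul_smul, ← Finset.smul_sum]; rfl }
  have hinj : Function.Injective L := by
    rw [← LinearMap.ker_eq_bot, LinearMap.ker_eq_bot']
    intro c hc
    have hx0 : T c x = 0 := congrArg Subtype.val hc
    have h0 : T c p₀ = 0 := (hT c).eq_zero_of_segment h hδU
      ((convex_ball p₀ δ).segment_subset hx (Metric.mem_ball_self hδ)) hx0
    have h1 : ∑ m, c m • b m = 0 := by
      ext1
      simpa [T, hΨ0] using h0
    funext m
    exact Fintype.linearIndependent_iff.1 b.linearIndependent c h1 m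
  have hsurj : Function.Surjective L := (LinearMap.injective_iff_surjective_of_finrank_eq_finrank
    (by rw [hdim x (hδU hx), Module.finrank_fin_fun])).1 hinj
  refine ⟨fun c _ => (L c).2, fun c _ d _ hcd => hinj (Subtype.ext hcd), fun v hv => ?_⟩
  obtain ⟨c, hc⟩ := hsurj ⟨v, hv⟩
  exact ⟨c, Set.mem_univ c, congrArg Subtype.val hc⟩

/-- On a simply connected `U`, every vector annihilated by the stable span at `p₀` extends to a
parallel section on all of `U`. -/
lemma global_exists (h : GoodConn U Ω V) [SimplyConnectedSpace U] {n r : ℕ} (hn : 0 < n)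
    (hr : ∀ p ∈ U, Module.finrank ℝ (lowSpan Ω V n p) = r)
    (hst : ∀ p ∈ U, lowSpan Ω V (n + 1) p = lowSpan Ω V n p)
    {p₀ : ℝ × ℝ} (hp₀ : p₀ ∈ U) {v : Fin 6 → ℝ} (hv : v ∈ annih Ω V n p₀) :
    ∃ Ψ, Ψ p₀ = v ∧ IsPar Ω U Ψ := by
  have : LocallyPathConnectedSpace U := h.isOpen.locallyPathConnectedSpace
  choose δ hδ hδU T hT hbij using fun p : U => local_triv h hn hr hst rfl p.2
  have hB : ∀ i : U, IsOpen {x : U | (x : ℝ × ℝ) ∈ Metric.ball (i : ℝ × ℝ) (δ i)} := fun i =>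
    Metric.isOpen_ball.preimage continuous_subtype_val
  obtain ⟨Φ, hΦ0, hΦ⟩ := monodromy (X := U)
    (fun i : U => {x : U | (x : ℝ × ℝ) ∈ Metric.ball (i : ℝ × ℝ) (δ i)}) hB id
    (fun x => Metric.mem_ball_self (hδ x)) (fun i c x => T i c x)
    (fun x => (annih Ω V n x : Set (Fin 6 → ℝ))) (fun i x hx => hbij i x hx)
    (fun i j c d => by
      -- coincidence at one point propagates to the convex intersection of the two balls
      refine isOpen_iff_mem_nhds.2 fun x hx => ?_
      filter_upwards [((hB i).inter (hB j)).mem_nhds ⟨hx.1, hx.2.1⟩] with y hy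
      exact ⟨hy.1, hy.2, IsPar.eqOn_convex h (Set.inter_subset_left.trans (hδU i))
        ((convex_ball _ _).inter (convex_ball _ _)) ((hT i c).mono Set.inter_subset_left)
        ((hT j d).mono Set.inter_subset_right) ⟨hx.1, hx.2.1⟩ hx.2.2 hy⟩)
    ⟨p₀, hp₀⟩ hv
  classical
  let Ψ : ℝ × ℝ → Fin 6 → ℝ := fun p => if hp : p ∈ U then Φ ⟨p, hp⟩ else 0
  have hΨ : ∀ p (hp : p ∈ U), Ψ p = Φ ⟨p, hp⟩ := fun p hp => dif_pos hp
  refine ⟨Ψ, (hΨ p₀ hp₀).trans hΦ0, fun q hq => ?_⟩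
  obtain ⟨i, c, hqi, he⟩ := hΦ ⟨q, hq⟩
  have he' : Ψ =ᶠ[𝓝 q] T i c := by
    have h1 : ∀ᶠ y : U in 𝓝 (⟨q, hq⟩ : U), Ψ (y : ℝ × ℝ) = T i c y := by
      filter_upwards [he] with y hy
      rw [hΨ y y.2]; exact hy
    have h2 := Filter.eventually_map (m := ((↑) : U → ℝ × ℝ)) (P := fun y => Ψ y = T i c y) |>.2 h1
    rwa [map_nhds_subtype_coe_eq_nhds hq (h.isOpen.mem_nhds hq)] at h2
  refine ((hT i c q hqi).congr_of_eventuallyEq he').congr_fderiv ?_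
  rw [he'.eq_of_nhds]

end

/-! ### The completeness theorem -/

section

open Matrix Topology

/-- Solutions in terms of partial derivatives are the same as parallel sections: the components of a
solution are differentiable by assumption, so its differential is determined by its partials. -/
lemma isPar_iff {U : Set (ℝ × ℝ)} (hU : IsOpen U) {A0 A1 A2 A3 : ℝ × ℝ → ℝ}
    {Ψ : ℝ × ℝ → Fin 6 → ℝ} :
    IsPar (Om A0 A1 A2 A3) U Ψ ↔ IsParallelSection U A0 A1 A2 A3 Ψ := by
  have e : ∀ p, DifferentiableAt ℝ Ψ p → ∀ i k, fderiv ℝ Ψ p k i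
      = k.1 * pd 0 (fun q => Ψ q i) p + k.2 * pd 1 (fun q => Ψ q i) p := by
    intro p hp i k
    have h1 := hasFDerivAt_pi'.1 hp.hasFDerivAt i
    rw [← fderiv_eq_pd h1.differentiableAt, h1.fderiv]
    rfl
  constructor
  · intro h
    refine ⟨fun i p hp => (hasFDerivAt_pi'.1 (h p hp) i).differentiableAt.differentiableWithinAt,
      fun p hp => ?_⟩
    have h2 : ∀ i k, (omF (Om A0 A1 A2 A3) p) k (Ψ p) i
        = k.1 * pd 0 (fun q => Ψ q i) p + k.2 * pd 1 (fun q => Ψ q i) p := fun i k => by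
      rw [← e p (h p hp).differentiableAt i k, (h p hp).fderiv]
      rfl
    simp only [omF_apply] at h2
    constructor
    · ext i
      have := h2 i (1, 0)
      simp only [one_mul, zero_mul, add_zero] at this
      change pd 0 (fun q => Ψ q i) p + ∑ j, Om A0 A1 A2 A3 0 p i j * Ψ p j = 0
      linarith
    · ext i
      have := h2 i (0, 1)
      simp only [one_mul, zero_mul, zero_add] at this
      change pd 1 (fun q => Ψ q i) p + ∑ j, Om A0 A1 A2 A3 1 p i j * Ψ p j = 0
      linarith
  · rintro ⟨hd, heq⟩ p hp
    have hdp : DifferentiableAt ℝ Ψ p := differentiableAt_pi.2 fun i =>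
      (hd i).differentiableAt (hU.mem_nhds hp)
    refine hdp.hasFDerivAt.congr_fderiv ?_
    refine ContinuousLinearMap.ext fun k => ?_
    ext i
    rw [e p hdp, ContinuousLinearMap.flip_apply, omF_apply]
    have h0 : pd 0 (fun q => Ψ q i) p + ∑ j, Om A0 A1 A2 A3 0 p i j * Ψ p j = 0 :=
      congrFun (heq p hp).1 i
    have h1 : pd 1 (fun q => Ψ q i) p + ∑ j, Om A0 A1 A2 A3 1 p i j * Ψ p j = 0 :=
      congrFun (heq p hp).2 i
    linear_combination k.1 * h0 + k.2 * h1

end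

/-- **Frobenius-type completeness theorem.** If the ranks of the matrices `ℱ_K` are
constant on `U` and `K₀` is the smallest `K` with `rank ℱ_K = rank ℱ_{K+1}`, then the
ranks stabilise from `K₀` on, and the space of solutions of the linear system
`∂Ψ + ΩΨ = 0` on `U` has dimension `6 − rank ℱ_{K₀}`. -/
theorem frobenius_completeness (U : Set (ℝ × ℝ)) (hU : IsOpen U) (hUconn : IsConnected U)
    (hUsc : SimplyConnectedSpace U)
    (A0 A1 A2 A3 : ℝ × ℝ → ℝ)
    (hA0 : AnalyticOnNhd ℝ A0 U) (hA1 : AnalyticOnNhd ℝ A1 U)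
    (hA2 : AnalyticOnNhd ℝ A2 U) (hA3 : AnalyticOnNhd ℝ A3 U)
    (r : ℕ → ℕ)
    (hconst : ∀ K : ℕ, ∀ p ∈ U, (Fmat A0 A1 A2 A3 K p).rank = r K)
    (K₀ : ℕ)
    (hK₀ : r K₀ = r (K₀ + 1))
    (hmin : ∀ K < K₀, r K ≠ r (K + 1)) :
    (∀ k : ℕ, r (K₀ + k) = r K₀) ∧
    ∃ b : Fin (6 - r K₀) → (ℝ × ℝ → Fin 6 → ℝ),
      (∀ m, IsParallelSection U A0 A1 A2 A3 (b m)) ∧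
      (∀ Ψ : ℝ × ℝ → Fin 6 → ℝ, IsParallelSection U A0 A1 A2 A3 Ψ →
        ∃! c : Fin (6 - r K₀) → ℝ, ∀ p ∈ U, Ψ p = ∑ m, c m • b m p) := by
  have h : GoodConn U (Om A0 A1 A2 A3) (Vrow A0 A1 A2 A3) :=
    ⟨hU, analytic_Om hU hA0 hA1 hA2 hA3, analytic_Vrow hU hA0 hA1 hA2 hA3,
      fun p hp => curvature hU hA0 hA1 hA2 hA3 hp⟩
  have hrank : ∀ K, ∀ p ∈ U,
      Module.finrank ℝ (lowSpan (Om A0 A1 A2 A3) (Vrow A0 A1 A2 A3) (K + 1) p) = r K := by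
    intro K p hp
    rw [← hconst K p hp, Matrix.rank_eq_finrank_span_row, ← span_symD h K hp]
    rfl
  have hst : ∀ p ∈ U, lowSpan (Om A0 A1 A2 A3) (Vrow A0 A1 A2 A3) (K₀ + 1 + 1) p
      = lowSpan (Om A0 A1 A2 A3) (Vrow A0 A1 A2 A3) (K₀ + 1) p := fun p hp =>
    (Submodule.eq_of_le_of_finrank_eq (lowSpan_mono (Nat.le_succ _) p)
      (by rw [hrank K₀ p hp, hrank (K₀ + 1) p hp, hK₀])).symm
  obtain ⟨p₀, hp₀⟩ := hUconn.nonempty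
  refine ⟨fun k => ?_, ?_⟩
  · rw [← hrank (K₀ + k) p₀ hp₀, ← hrank K₀ p₀ hp₀,
      ← lowSpan_stable h K₀.succ_pos (hrank K₀) hst k hp₀, Nat.add_right_comm]
  have hdim : Module.finrank ℝ (annih (Om A0 A1 A2 A3) (Vrow A0 A1 A2 A3) (K₀ + 1) p₀)
      = 6 - r K₀ := by rw [finrank_annih, hrank K₀ p₀ hp₀]
  let e := Module.finBasisOfFinrankEq ℝ _ hdim
  choose b hb0 hb using fun m => global_exists h K₀.succ_pos (hrank K₀) hst hp₀ (e m).2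
  refine ⟨b, fun m => (isPar_iff hU).1 (hb m), fun Ψ hΨ => ?_⟩
  have hΨ' := (isPar_iff hU).2 hΨ
  have hmem := hΨ'.mem_annih h hU subset_rfl (K₀ + 1) hp₀
  refine ⟨e.repr ⟨Ψ p₀, hmem⟩, ?_, fun c hc => ?_⟩
  · refine hΨ'.eqOn h hUconn.isPreconnected (IsPar.sum hb _) hp₀ ?_
    simp only [hb0]
    have h1 := congrArg Subtype.val (e.sum_repr ⟨Ψ p₀, hmem⟩)
    rw [Submodule.coe_sum] at h1
    exact h1.symm
  · have h1 : (⟨Ψ p₀, hmem⟩ : annih (Om A0 A1 A2 A3) (Vrow A0 A1 A2 A3) (K₀ + 1) p₀)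
        = ∑ m, c m • e m := by
      ext1
      simpa [hb0] using hc p₀ hp₀
    rw [h1, e.repr_sum_self]
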